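/- arXiv:2306.04230 — 6 statements merged into one kernel-verified Lean document; each statement's English description precedes it below -/
import Mathlib

section
/- Let H be a real Hilbert space, let h : H → ℝ be convex and Fréchet differentiable, and suppose the gradient ∇h : H → H is Lipschitz continuous with constant 1/L for some L > 0. For any λ ∈ [0, 2L], the mapping S_λ : H → H defined by S_λ(x) = x − λ·∇h(x) is nonexpansive, i.e. ‖S_λ(x) − S_λ(y)‖ ≤ ‖x − y‖ for all x, y ∈ H. -/
open Filter Topology

theorem aux_line {H : Type*} [NormedAddCommGroup H] [InnerProductSpace ℝ H] [CompleteSpace H]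
    (h : H → ℝ) (h' : H → H) (hgrad : ∀ x : H, HasGradientAt h (h' x) x) (x v : H) (t : ℝ) :
    HasDerivAt (fun s : ℝ => h (x + s • v)) (inner ℝ (h' (x + t • v)) v) t := by
  have h1 : HasDerivAt (fun s : ℝ => x + s • v) v t := by
    simpa using ((hasDerivAt_id t).smul_const v).const_add x
  have h2 := (hgrad (x + t • v)).hasFDerivAt.comp_hasDerivAt t h1
  refine HasDerivAt.congr_deriv (f := fun s : ℝ => h (x + s • v)) h2 ?_
  simp

theorem aux_convex {H : Type*} [NormedAddCommGroup H] [InnerProductSpace ℝ H] [CompleteSpace H]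
    (h : H → ℝ) (h' : H → H) (hgrad : ∀ x : H, HasGradientAt h (h' x) x)
    (hconv : ConvexOn ℝ Set.univ h) (x v : H) :
    h x + inner ℝ (h' x) v ≤ h (x + v) := by
  have hc : ConvexOn ℝ Set.univ (fun s : ℝ => h (x + s • v)) := by
    refine ⟨convex_univ, fun a _ b _ p q hp hq hpq => ?_⟩
    have := hconv.2 (Set.mem_univ (x + a • v)) (Set.mem_univ (x + b • v)) hp hq hpq
    convert this using 2
    have : x = (p + q) • x := by rw [hpq, one_smul]
    nth_rewrite 1 [this]
    simp only [smul_eq_mul]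
    module
  have hd := aux_line h h' hgrad x v 0
  have := hc.le_slope_of_hasDerivAt (Set.mem_univ 0) (Set.mem_univ 1) one_pos hd
  simp [slope_def_field] at this
  linarith

theorem aux_descent {H : Type*} [NormedAddCommGroup H] [InnerProductSpace ℝ H] [CompleteSpace H]
    (h : H → ℝ) (h' : H → H) (hgrad : ∀ x : H, HasGradientAt h (h' x) x) (K : ℝ)
    (hlip : ∀ x y : H, ‖h' x - h' y‖ ≤ K * ‖x - y‖) (x v : H) :
    h (x + v) ≤ h x + inner ℝ (h' x) v + K / 2 * ‖v‖ ^ 2 := by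
  have hB : ∀ t : ℝ, HasDerivAt
      (fun s : ℝ => h x + s * inner ℝ (h' x) v + K / 2 * ‖v‖ ^ 2 * s ^ 2)
      (inner ℝ (h' x) v + K * ‖v‖ ^ 2 * t) t := by
    intro t
    have := (((hasDerivAt_id t).mul_const (inner ℝ (h' x) v)).const_add (h x)).add
      (((hasDerivAt_id t).pow 2).const_mul (K / 2 * ‖v‖ ^ 2))
    refine HasDerivAt.congr_deriv this ?_
    simp
    ring
  have key := image_le_of_deriv_right_le_deriv_boundary (a := 0) (b := 1)
    (f := fun s : ℝ => h (x + s • v))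
    (f' := fun t => inner ℝ (h' (x + t • v)) v)
    (B := fun s : ℝ => h x + s * inner ℝ (h' x) v + K / 2 * ‖v‖ ^ 2 * s ^ 2)
    (B' := fun t => inner ℝ (h' x) v + K * ‖v‖ ^ 2 * t)
    (fun t _ => (aux_line h h' hgrad x v t).continuousAt.continuousWithinAt)
    (fun t _ => (aux_line h h' hgrad x v t).hasDerivWithinAt)
    (by simp)
    (fun t _ => (hB t).continuousAt.continuousWithinAt)
    (fun t _ => (hB t).hasDerivWithinAt)
    (by
      intro t ht
      have h1 := real_inner_le_norm (h' (x + t • v) - h' x) v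
      have h2 := hlip (x + t • v) x
      rw [add_sub_cancel_left, norm_smul, Real.norm_of_nonneg ht.1] at h2
      have h3 := mul_le_mul_of_nonneg_right h2 (norm_nonneg v)
      rw [inner_sub_left] at h1
      show _ ≤ inner ℝ (h' x) v + K * ‖v‖ ^ 2 * t
      nlinarith)
  have := key (x := 1) (by simp)
  simpa using this

theorem aux_half {H : Type*} [NormedAddCommGroup H] [InnerProductSpace ℝ H] [CompleteSpace H]
    (h : H → ℝ) (h' : H → H) (L : ℝ) (hL : 0 < L)
    (hconv : ConvexOn ℝ Set.univ h)
    (hgrad : ∀ x : H, HasGradientAt h (h' x) x)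
    (hlip : ∀ x y : H, ‖h' x - h' y‖ ≤ (1 / L) * ‖x - y‖) (x y : H) :
    h x + inner ℝ (h' x) (y - x) + L / 2 * ‖h' y - h' x‖ ^ 2 ≤ h y := by
  have h1 := aux_convex h h' hgrad hconv x (y - x + (-L) • (h' y - h' x))
  have h2 := aux_descent h h' hgrad (1 / L) hlip y ((-L) • (h' y - h' x))
  have e : x + (y - x + (-L) • (h' y - h' x)) = y + (-L) • (h' y - h' x) := by abel
  rw [e, inner_add_right, inner_smul_right] at h1
  rw [inner_smul_right, norm_smul, mul_pow, Real.norm_eq_abs, sq_abs] at h2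
  have e2 : 1 / L / 2 * ((-L) ^ 2 * ‖h' y - h' x‖ ^ 2) = L / 2 * ‖h' y - h' x‖ ^ 2 := by
    field_simp
  rw [e2] at h2
  have e3 : inner ℝ (h' y) (h' y - h' x) - inner ℝ (h' x) (h' y - h' x)
      = ‖h' y - h' x‖ ^ 2 := by
    rw [← inner_sub_left, real_inner_self_eq_norm_sq]
  have e4 : L * inner ℝ (h' y) (h' y - h' x) - L * inner ℝ (h' x) (h' y - h' x)
      = L * ‖h' y - h' x‖ ^ 2 := by
    rw [← e3]; ring
  linarith

theorem gradient_step_nonexpansive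
    {H : Type*} [NormedAddCommGroup H] [InnerProductSpace ℝ H] [CompleteSpace H]
    (h : H → ℝ) (h' : H → H) (L : ℝ) (hL : 0 < L)
    (hconv : ConvexOn ℝ Set.univ h)
    (hgrad : ∀ x : H, HasGradientAt h (h' x) x)
    (hlip : ∀ x y : H, ‖h' x - h' y‖ ≤ (1 / L) * ‖x - y‖)
    (lam : ℝ) (hlam : lam ∈ Set.Icc (0 : ℝ) (2 * L)) :
    ∀ x y : H, ‖(x - lam • h' x) - (y - lam • h' y)‖ ≤ ‖x - y‖ := by
  intro x y
  have h1 := aux_half h h' L hL hconv hgrad hlip x y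
  have h2 := aux_half h h' L hL hconv hgrad hlip y x
  rw [norm_sub_rev (h' y) (h' x)] at h1
  have e1 : inner ℝ (h' x) (y - x) = - inner ℝ (h' x) (x - y) := by
    rw [← inner_neg_right, neg_sub]
  have co : L * ‖h' x - h' y‖ ^ 2 ≤ inner ℝ (x - y) (h' x - h' y) := by
    rw [real_inner_comm, inner_sub_left]
    linarith
  have e : (x - lam • h' x) - (y - lam • h' y) = (x - y) - lam • (h' x - h' y) := by module
  rw [e]
  refine (sq_le_sq₀ (norm_nonneg _) (norm_nonneg _)).1 ?_
  rw [norm_sub_sq_real, inner_smul_right, norm_smul, mul_pow, Real.norm_eq_abs, sq_abs]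
  have a1 := mul_le_mul_of_nonneg_left co hlam.1
  have a2 := mul_nonneg (mul_nonneg hlam.1 (sub_nonneg.2 hlam.2)) (sq_nonneg ‖h' x - h' y‖)
  nlinarith
end

section
/- Suppose that for each i ∈ I there is a bounded, closed and convex subset X_i of H with S ⊆ X_i, and that the update of w_n^{(i+1)} in Algorithm 1 is replaced by w_n^{(i+1)} = P_{X_i}(α_n·u^{(i)} + (1 − α_n)·T_i(y_n^{(i)})), where P_{X_i} denotes the metric projection onto X_i. Then for each i ∈ I the sequence {y_n^{(i)}} generated by the resulting algorithm is bounded. -/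
open Filter Topology

lemma aux_rec_bdd (a b : ℕ → ℝ) (G : ℝ) (ha : ∀ n, 0 ≤ a n) (hG : 0 ≤ G)
    (hb : Tendsto b atTop (𝓝 0))
    (hrec : ∀ n ≥ 1, a (n+1) ≤ G + b n * a n) : ∃ D, ∀ n, a n ≤ D := by
  have h1 : ∀ᶠ n in atTop, b n < 1/2 := hb.eventually_lt_const (by norm_num)
  obtain ⟨N, hN⟩ := eventually_atTop.1 h1
  have hfin : ∀ n ≤ N + 1, a n ≤ ∑ k ∈ Finset.range (N+2), a k := fun n hn =>
    Finset.single_le_sum (f := a) (fun k _ => ha k) (Finset.mem_range.2 (by omega))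
  have hB : 0 ≤ ∑ k ∈ Finset.range (N+2), a k := Finset.sum_nonneg (fun k _ => ha k)
  refine ⟨(∑ k ∈ Finset.range (N+2), a k) + 2 * G, fun n => ?_⟩
  rcases le_total n (N+1) with hn | hn
  · linarith [hfin n hn]
  · induction n, hn using Nat.le_induction with
    | base => linarith [hfin (N+1) le_rfl]
    | succ n hn ih =>
      have h2 := hrec n (by omega)
      have h3 : b n * a n ≤ 1/2 * a n :=
        mul_le_mul_of_nonneg_right (hN n (by omega)).le (ha n)
      linarith

lemma aux_minorant {H : Type*} [NormedAddCommGroup H] [InnerProductSpace ℝ H]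
    (f : H → ℝ) (hc : Continuous f) (hf : ConvexOn ℝ Set.univ f) :
    ∃ K, 0 ≤ K ∧ ∀ v, f 0 - 1 - K * ‖v‖ ≤ f v := by
  obtain ⟨δ, hδ, h⟩ := Metric.continuous_iff.1 hc 0 1 one_pos
  refine ⟨2 / δ, by positivity, fun v => ?_⟩
  by_cases hv : ‖v‖ < δ
  · have h1 := h v (by simpa using hv)
    rw [Real.dist_eq, abs_lt] at h1
    have : 0 ≤ 2 / δ * ‖v‖ := by positivity
    linarith
  · push Not at hv
    have hv0 : 0 < ‖v‖ := by linarith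
    set t : ℝ := δ / 2 / ‖v‖ with ht
    have ht0 : 0 < t := by positivity
    have ht1 : t ≤ 1 := by rw [ht, div_le_one hv0]; linarith
    have htv : t * ‖v‖ = δ / 2 := by rw [ht]; field_simp
    have h1 := h (t • v) (by
      rw [dist_zero_right, norm_smul, Real.norm_of_nonneg ht0.le, htv]; linarith)
    rw [Real.dist_eq, abs_lt] at h1
    have h2 := hf.2 (Set.mem_univ (0:H)) (Set.mem_univ v) (sub_nonneg.2 ht1) ht0.le (by ring)
    simp only [smul_zero, zero_add, smul_eq_mul] at h2
    have h3 : t * (2 / δ * ‖v‖) = 1 := by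
      rw [ht]; field_simp
    have h4 : t * (f 0 - 1 - 2 / δ * ‖v‖) ≤ t * f v := by nlinarith
    exact le_of_mul_le_mul_left h4 ht0

theorem projected_algorithm_y_bounded
    {H : Type*} [NormedAddCommGroup H] [InnerProductSpace ℝ H] [CompleteSpace H]
    (M : ℕ) (hM : 1 ≤ M)
    (f h : ℕ → H → ℝ) (h' : ℕ → H → H) (L : ℕ → ℝ) (T : ℕ → H → H)
    (hf_cont : ∀ i ∈ Finset.Icc 1 M, Continuous (f i))
    (hf_conv : ∀ i ∈ Finset.Icc 1 M, ConvexOn ℝ Set.univ (f i))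
    (hh_conv : ∀ i ∈ Finset.Icc 1 M, ConvexOn ℝ Set.univ (h i))
    (hh_grad : ∀ i ∈ Finset.Icc 1 M, ∀ x : H, HasGradientAt (h i) (h' i x) x)
    (hL_pos : ∀ i ∈ Finset.Icc 1 M, 0 < L i)
    (hh_lip : ∀ i ∈ Finset.Icc 1 M, ∀ x y : H, ‖h' i x - h' i y‖ ≤ (1 / L i) * ‖x - y‖)
    (hT_firm : ∀ i ∈ Finset.Icc 1 M, ∀ x y : H,
      ‖T i x - T i y‖ ^ 2 ≤ @inner ℝ H _ (T i x - T i y) (x - y))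
    (S : Set H) (hS : S = ⋂ i ∈ Finset.Icc 1 M, {x : H | T i x = x}) (hS_ne : S.Nonempty)
    (θ lam β α : ℕ → ℝ) (σ : ℝ) (hσ : 1 ≤ σ)
    (hθ_range : ∀ n, 0 ≤ θ n ∧ θ n < 1)
    (hlam_pos : ∀ n, 0 < lam n)
    (hlam_le : ∀ n, ∀ i ∈ Finset.Icc 1 M, lam n ≤ 2 * L i)
    (hβ_range : ∀ n, 0 < β n ∧ β n ≤ 1)
    (hα_range : ∀ n, 0 < α n ∧ α n ≤ 1)
    (hθ_anti : Antitone θ) (hlam_anti : Antitone lam)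
    (hβ_anti : Antitone β) (hα_anti : Antitone α)
    (hθ_lim : Tendsto θ atTop (𝓝 0)) (hlam_lim : Tendsto lam atTop (𝓝 0))
    (hβ_lim : Tendsto β atTop (𝓝 0)) (hα_lim : Tendsto α atTop (𝓝 0))
    (hC1 : ¬ Summable α)
    (hC2 : Tendsto (fun n => (1 / α (n+1)) * |1 / lam (n+1) - 1 / lam n|) atTop (𝓝 0))
    (hC3 : Tendsto (fun n => (1 / lam (n+1)) * |1 - α n / α (n+1)|) atTop (𝓝 0))
    (hC4 : Tendsto (fun n => α n / lam n) atTop (𝓝 0))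
    (hC5 : Tendsto (fun n => θ n / (α (n+1) * lam (n+1))) atTop (𝓝 0))
    (hC6 : ∀ n, lam n / lam (n+1) ≤ σ)
    (hC7 : Tendsto (fun n => β n / α (n+1)) atTop (𝓝 0))
    (x : ℕ → H) (w z y d : ℕ → ℕ → H) (u : ℕ → H)
    (X : ℕ → Set H) (P : ℕ → H → H)
    (hX_bdd : ∀ i ∈ Finset.Icc 1 M, Bornology.IsBounded (X i))
    (hX_closed : ∀ i ∈ Finset.Icc 1 M, IsClosed (X i))
    (hX_conv : ∀ i ∈ Finset.Icc 1 M, Convex ℝ (X i))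
    (hSX : ∀ i ∈ Finset.Icc 1 M, S ⊆ X i)
    (hP_mem : ∀ i ∈ Finset.Icc 1 M, ∀ v : H, P i v ∈ X i)
    (hP_proj : ∀ i ∈ Finset.Icc 1 M, ∀ v : H, ∀ q ∈ X i, ‖v - P i v‖ ≤ ‖v - q‖)
    (hd1 : ∀ i ∈ Finset.Icc 1 M, d 1 i = -(h' i (z 0 i)))
    (hw1 : ∀ n ≥ 1, w n 1 = x n)
    (hz : ∀ n ≥ 1, ∀ i ∈ Finset.Icc 1 M, z n i = w n i + θ n • (w n i - w (n-1) i))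
    (hd : ∀ n ≥ 1, ∀ i ∈ Finset.Icc 1 M, d (n+1) i = -(h' i (z n i)) + β n • d n i)
    (hy : ∀ n ≥ 1, ∀ i ∈ Finset.Icc 1 M, ∀ v : H,
      f i (y n i) + (1 / (2 * lam n)) * ‖z n i + lam n • d (n+1) i - y n i‖ ^ 2
        ≤ f i v + (1 / (2 * lam n)) * ‖z n i + lam n • d (n+1) i - v‖ ^ 2)
    (hw : ∀ n ≥ 1, ∀ i ∈ Finset.Icc 1 M,
      w n (i+1) = P i (α n • u i + (1 - α n) • T i (y n i)))
    (hx : ∀ n ≥ 1, x (n+1) = w n (M+1))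
    : ∀ i ∈ Finset.Icc 1 M, ∃ C, ∀ n ≥ 1, ‖y n i‖ ≤ C := by
  intro i hi
  have hbX : ∀ j ∈ Finset.Icc 1 M, ∃ R, ∀ q ∈ X j, ‖q‖ ≤ R := fun j hj =>
    (hX_bdd j hj).exists_norm_le
  obtain ⟨hi1, hiM⟩ := Finset.mem_Icc.1 hi
  -- `w` stays bounded
  have hwb : ∃ W, ∀ n, ‖w n i‖ ≤ W := by
    by_cases h1 : i = 1
    · subst h1
      obtain ⟨R, hR⟩ := hbX M (Finset.mem_Icc.2 ⟨hM, le_rfl⟩)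
      refine ⟨max R (max ‖w 0 1‖ ‖w 1 1‖), fun n => ?_⟩
      match n with
      | 0 => simp
      | 1 => simp
      | n+2 =>
        refine le_max_of_le_left (hR _ ?_)
        rw [hw1 _ (by omega), hx (n+1) (by omega), hw (n+1) (by omega) M
          (Finset.mem_Icc.2 ⟨hM, le_rfl⟩)]
        exact hP_mem M (Finset.mem_Icc.2 ⟨hM, le_rfl⟩) _
    · obtain ⟨j, rfl⟩ : ∃ j, i = j + 1 := ⟨i - 1, by omega⟩
      have hj : j ∈ Finset.Icc 1 M := Finset.mem_Icc.2 ⟨by omega, by omega⟩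
      obtain ⟨R, hR⟩ := hbX j hj
      refine ⟨max R ‖w 0 (j+1)‖, fun n => ?_⟩
      match n with
      | 0 => simp
      | n+1 =>
        refine le_max_of_le_left (hR _ ?_)
        rw [hw (n+1) (by omega) j hj]
        exact hP_mem j hj _
  obtain ⟨W, hW⟩ := hwb
  have hW0 : 0 ≤ W := (norm_nonneg _).trans (hW 0)
  have hzb : ∀ n ≥ 1, ‖z n i‖ ≤ 3 * W := by
    intro n hn
    rw [hz n hn i hi]
    have h1 := norm_add_le (w n i) (θ n • (w n i - w (n-1) i))
    rw [norm_smul, Real.norm_of_nonneg (hθ_range n).1] at h1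
    have h2 := norm_sub_le (w n i) (w (n-1) i)
    have h3 : θ n * ‖w n i - w (n-1) i‖ ≤ 1 * ‖w n i - w (n-1) i‖ :=
      mul_le_mul_of_nonneg_right (hθ_range n).2.le (norm_nonneg _)
    linarith [hW n, hW (n-1)]
  have hLi := hL_pos i hi
  have hgb : ∀ n ≥ 1, ‖h' i (z n i)‖ ≤ 1 / L i * (3 * W) + ‖h' i 0‖ := by
    intro n hn
    have h1 := hh_lip i hi (z n i) 0
    rw [sub_zero] at h1
    have h2 := norm_sub_norm_le (h' i (z n i)) (h' i 0)
    have h3 : 1 / L i * ‖z n i‖ ≤ 1 / L i * (3 * W) :=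
      mul_le_mul_of_nonneg_left (hzb n hn) (by positivity)
    linarith
  obtain ⟨D, hD⟩ := aux_rec_bdd (fun n => ‖d n i‖) β (1 / L i * (3 * W) + ‖h' i 0‖)
    (fun n => norm_nonneg _) (by positivity) hβ_lim (by
      intro n hn
      rw [hd n hn i hi]
      have h1 := norm_add_le (-(h' i (z n i))) (β n • d n i)
      rw [norm_smul, Real.norm_of_nonneg (hβ_range n).1.le, norm_neg] at h1
      linarith [hgb n hn])
  have hD0 : 0 ≤ D := (norm_nonneg _).trans (hD 0)
  obtain ⟨K, hK, hmin⟩ := aux_minorant (f i) (hf_cont i hi) (hf_conv i hi)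
  set A : ℝ := 3 * W + lam 0 * D with hA
  have hl0 := hlam_pos 0
  have hA0 : 0 ≤ A := by positivity
  refine ⟨2 * A + 2 * lam 0 * K + 2 * lam 0 + 1, fun n hn => ?_⟩
  have hln := hlam_pos n
  have hle : lam n ≤ lam 0 := hlam_anti (Nat.zero_le n)
  have h1 := hy n hn i hi 0
  have h2 := hmin (y n i)
  set a := z n i + lam n • d (n+1) i with ha
  have haA : ‖a‖ ≤ A := by
    have h3 := norm_add_le (z n i) (lam n • d (n+1) i)
    rw [norm_smul, Real.norm_of_nonneg hln.le] at h3
    have h4 : lam n * ‖d (n+1) i‖ ≤ lam 0 * D :=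
      mul_le_mul hle (hD (n+1)) (norm_nonneg _) hl0.le
    linarith [hzb n hn]
  rw [sub_zero] at h1
  set r := ‖y n i‖ with hr
  have hr0 : 0 ≤ r := norm_nonneg _
  have h5 : ‖a - y n i‖ ^ 2 ≤ ‖a‖ ^ 2 + 2 * lam n * (1 + K * r) := by
    have h6 : 1 / (2 * lam n) * ‖a - y n i‖ ^ 2 ≤ 1 / (2 * lam n) * ‖a‖ ^ 2 + (1 + K * r) := by
      linarith
    have h7 := mul_le_mul_of_nonneg_left h6 (by positivity : 0 ≤ 2 * lam n)
    have e1 : 2 * lam n * (1 / (2 * lam n) * ‖a - y n i‖ ^ 2) = ‖a - y n i‖ ^ 2 := by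
      field_simp
    have e2 : 2 * lam n * (1 / (2 * lam n) * ‖a‖ ^ 2 + (1 + K * r))
        = ‖a‖ ^ 2 + 2 * lam n * (1 + K * r) := by
      field_simp
    rwa [e1, e2] at h7
  have h8 : (r - ‖a‖) ^ 2 ≤ ‖a - y n i‖ ^ 2 := by
    have := abs_norm_sub_norm_le (y n i) a
    rw [norm_sub_rev] at this
    exact sq_le_sq' (by linarith [neg_abs_le (‖y n i‖ - ‖a‖)]) ((le_abs_self _).trans this)
  have h9 : 2 * lam n * (1 + K * r) ≤ 2 * lam 0 * (1 + K * r) :=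
    mul_le_mul_of_nonneg_right (by linarith) (by positivity)
  have h10 : r * ‖a‖ ≤ r * A := mul_le_mul_of_nonneg_left haA hr0
  have h11 : r ^ 2 ≤ (2 * A + 2 * lam 0 * K) * r + 2 * lam 0 := by nlinarith
  by_contra hcon
  push Not at hcon
  have hp : 0 ≤ 2 * A + 2 * lam 0 * K := by positivity
  have h12 : (2 * A + 2 * lam 0 * K + 2 * lam 0 + 1) * r ≤ r * r :=
    mul_le_mul_of_nonneg_right hcon.le hr0
  have h13 : 1 ≤ r := by linarith
  nlinarith
end

section
/- The sequences {T_i(y_n^{(i)})} (i ∈ I), {x_n}, {w_n^{(i)}} (i ∈ I), {z_n^{(i)}} (i ∈ I) and {d_n^{(i)}} (i ∈ I) generated by Algorithm 1 are all bounded. -/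
open Filter Topology

theorem rec_bdd_aux (a β : ℕ → ℝ) (K : ℝ) (hK : 0 ≤ K) (ha : ∀ n, 0 ≤ a n)
    (hβ : Tendsto β atTop (𝓝 0)) (hr : ∀ n ≥ 1, a (n+1) ≤ K + β n * a n) :
    ∃ C, ∀ n ≥ 1, a n ≤ C := by
  obtain ⟨N, hN⟩ := eventually_atTop.1 (hβ.eventually (ge_mem_nhds (show (0:ℝ) < 1/2 by norm_num)))
  have hs : 0 ≤ ∑ k ∈ Finset.range (N+2), a k := Finset.sum_nonneg (fun k _ => ha k)
  refine ⟨2 * K + ∑ k ∈ Finset.range (N+2), a k, fun n _ => ?_⟩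
  induction n with
  | zero => omega
  | succ n ih =>
    by_cases hn : n + 1 < N + 2
    · have := Finset.single_le_sum (f := a) (fun k _ => ha k) (Finset.mem_range.2 hn)
      linarith
    · have h1 := ih (by omega)
      have h2 := hr n (by omega)
      have h3 := hN n (by omega)
      have h4 : β n * a n ≤ 1/2 * a n := mul_le_mul_of_nonneg_right h3 (ha n)
      linarith

theorem alg1_sequences_bounded
    {H : Type*} [NormedAddCommGroup H] [InnerProductSpace ℝ H] [CompleteSpace H]
    (M : ℕ) (hM : 1 ≤ M)
    (f h : ℕ → H → ℝ) (h' : ℕ → H → H) (L : ℕ → ℝ) (T : ℕ → H → H)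
    (hf_cont : ∀ i ∈ Finset.Icc 1 M, Continuous (f i))
    (hf_conv : ∀ i ∈ Finset.Icc 1 M, ConvexOn ℝ Set.univ (f i))
    (hh_conv : ∀ i ∈ Finset.Icc 1 M, ConvexOn ℝ Set.univ (h i))
    (hh_grad : ∀ i ∈ Finset.Icc 1 M, ∀ x : H, HasGradientAt (h i) (h' i x) x)
    (hL_pos : ∀ i ∈ Finset.Icc 1 M, 0 < L i)
    (hh_lip : ∀ i ∈ Finset.Icc 1 M, ∀ x y : H, ‖h' i x - h' i y‖ ≤ (1 / L i) * ‖x - y‖)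
    (hT_firm : ∀ i ∈ Finset.Icc 1 M, ∀ x y : H,
      ‖T i x - T i y‖ ^ 2 ≤ @inner ℝ H _ (T i x - T i y) (x - y))
    (S : Set H) (hS : S = ⋂ i ∈ Finset.Icc 1 M, {x : H | T i x = x}) (hS_ne : S.Nonempty)
    (θ lam β α : ℕ → ℝ) (σ : ℝ) (hσ : 1 ≤ σ)
    (hθ_range : ∀ n, 0 ≤ θ n ∧ θ n < 1)
    (hlam_pos : ∀ n, 0 < lam n)
    (hlam_le : ∀ n, ∀ i ∈ Finset.Icc 1 M, lam n ≤ 2 * L i)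
    (hβ_range : ∀ n, 0 < β n ∧ β n ≤ 1)
    (hα_range : ∀ n, 0 < α n ∧ α n ≤ 1)
    (hθ_anti : Antitone θ) (hlam_anti : Antitone lam)
    (hβ_anti : Antitone β) (hα_anti : Antitone α)
    (hθ_lim : Tendsto θ atTop (𝓝 0)) (hlam_lim : Tendsto lam atTop (𝓝 0))
    (hβ_lim : Tendsto β atTop (𝓝 0)) (hα_lim : Tendsto α atTop (𝓝 0))
    (hC1 : ¬ Summable α)
    (hC2 : Tendsto (fun n => (1 / α (n+1)) * |1 / lam (n+1) - 1 / lam n|) atTop (𝓝 0))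
    (hC3 : Tendsto (fun n => (1 / lam (n+1)) * |1 - α n / α (n+1)|) atTop (𝓝 0))
    (hC4 : Tendsto (fun n => α n / lam n) atTop (𝓝 0))
    (hC5 : Tendsto (fun n => θ n / (α (n+1) * lam (n+1))) atTop (𝓝 0))
    (hC6 : ∀ n, lam n / lam (n+1) ≤ σ)
    (hC7 : Tendsto (fun n => β n / α (n+1)) atTop (𝓝 0))
    (x : ℕ → H) (w z y d : ℕ → ℕ → H) (u : ℕ → H)
    (hd1 : ∀ i ∈ Finset.Icc 1 M, d 1 i = -(h' i (z 0 i)))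
    (hw1 : ∀ n ≥ 1, w n 1 = x n)
    (hz : ∀ n ≥ 1, ∀ i ∈ Finset.Icc 1 M, z n i = w n i + θ n • (w n i - w (n-1) i))
    (hd : ∀ n ≥ 1, ∀ i ∈ Finset.Icc 1 M, d (n+1) i = -(h' i (z n i)) + β n • d n i)
    (hy : ∀ n ≥ 1, ∀ i ∈ Finset.Icc 1 M, ∀ v : H,
      f i (y n i) + (1 / (2 * lam n)) * ‖z n i + lam n • d (n+1) i - y n i‖ ^ 2
        ≤ f i v + (1 / (2 * lam n)) * ‖z n i + lam n • d (n+1) i - v‖ ^ 2)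
    (hw : ∀ n ≥ 1, ∀ i ∈ Finset.Icc 1 M,
      w n (i+1) = α n • u i + (1 - α n) • T i (y n i))
    (hx : ∀ n ≥ 1, x (n+1) = w n (M+1))
    (hy_bdd : ∀ i ∈ Finset.Icc 1 M, ∃ C, ∀ n ≥ 1, ‖y n i‖ ≤ C)
    : (∀ i ∈ Finset.Icc 1 M, ∃ C, ∀ n ≥ 1, ‖T i (y n i)‖ ≤ C) ∧
      (∃ C, ∀ n ≥ 1, ‖x n‖ ≤ C) ∧
      (∀ i ∈ Finset.Icc 1 M, ∃ C, ∀ n ≥ 1, ‖w n i‖ ≤ C) ∧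
      (∀ i ∈ Finset.Icc 1 M, ∃ C, ∀ n ≥ 1, ‖z n i‖ ≤ C) ∧
      (∀ i ∈ Finset.Icc 1 M, ∃ C, ∀ n ≥ 1, ‖d n i‖ ≤ C) := by
  obtain ⟨p, hp⟩ := hS_ne
  have hfix : ∀ i ∈ Finset.Icc 1 M, T i p = p := by
    intro i hi
    rw [hS] at hp
    exact Set.mem_iInter₂.1 hp i hi
  have hne : ∀ i ∈ Finset.Icc 1 M, ∀ v, ‖T i v - p‖ ≤ ‖v - p‖ := by
    intro i hi v
    have h1 := hT_firm i hi v p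
    rw [hfix i hi] at h1
    have h2 := real_inner_le_norm (T i v - p) (v - p)
    by_contra hc
    push Not at hc
    nlinarith [norm_nonneg (v - p), norm_nonneg (T i v - p)]
  have hTb : ∀ i ∈ Finset.Icc 1 M, ∃ C, ∀ n ≥ 1, ‖T i (y n i)‖ ≤ C := by
    intro i hi
    obtain ⟨C, hC⟩ := hy_bdd i hi
    refine ⟨C + 2 * ‖p‖, fun n hn => ?_⟩
    have h1 := hne i hi (y n i)
    have h2 := norm_sub_le (y n i) p
    have h3 := norm_sub_norm_le (T i (y n i)) p
    linarith [hC n hn]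
  have hws : ∀ i ∈ Finset.Icc 1 M, ∃ C, ∀ n ≥ 1, ‖w n (i+1)‖ ≤ C := by
    intro i hi
    obtain ⟨C, hC⟩ := hTb i hi
    refine ⟨‖u i‖ + C, fun n hn => ?_⟩
    rw [hw n hn i hi]
    obtain ⟨h0, h1⟩ := hα_range n
    have h2 := norm_add_le (α n • u i) ((1 - α n) • T i (y n i))
    rw [norm_smul, norm_smul, Real.norm_of_nonneg h0.le,
      Real.norm_of_nonneg (sub_nonneg.2 h1)] at h2
    have h3 := hC n hn
    nlinarith [norm_nonneg (u i), norm_nonneg (T i (y n i))]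
  have hxb : ∃ C, ∀ n ≥ 1, ‖x n‖ ≤ C := by
    obtain ⟨C, hC⟩ := hws M (Finset.mem_Icc.2 ⟨hM, le_rfl⟩)
    refine ⟨max ‖x 1‖ C, fun n hn => ?_⟩
    obtain ⟨k, rfl⟩ : ∃ k, n = k + 1 := ⟨n - 1, by omega⟩
    rcases Nat.eq_zero_or_pos k with rfl | hk
    · exact le_max_left _ _
    · rw [hx k hk]
      exact (hC k hk).trans (le_max_right _ _)
  have hwb : ∀ i ∈ Finset.Icc 1 M, ∃ C, ∀ n ≥ 1, ‖w n i‖ ≤ C := by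
    intro i hi
    obtain ⟨hi1, hi2⟩ := Finset.mem_Icc.1 hi
    obtain ⟨k, rfl⟩ : ∃ k, i = k + 1 := ⟨i - 1, by omega⟩
    rcases Nat.eq_zero_or_pos k with rfl | hk
    · obtain ⟨C, hC⟩ := hxb
      refine ⟨C, fun n hn => ?_⟩
      have := hw1 n hn
      simp only [zero_add]
      rw [this]
      exact hC n hn
    · exact hws k (Finset.mem_Icc.2 ⟨hk, by omega⟩)
  have hzb : ∀ i ∈ Finset.Icc 1 M, ∃ C, ∀ n ≥ 1, ‖z n i‖ ≤ C := by
    intro i hi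
    obtain ⟨C, hC⟩ := hwb i hi
    have hC' : ∀ n, ‖w n i‖ ≤ max ‖w 0 i‖ C := by
      intro n
      rcases Nat.eq_zero_or_pos n with rfl | hk
      · exact le_max_left _ _
      · exact (hC n hk).trans (le_max_right _ _)
    refine ⟨3 * max ‖w 0 i‖ C, fun n hn => ?_⟩
    rw [hz n hn i hi]
    obtain ⟨h0, h1⟩ := hθ_range n
    have h2 := norm_add_le (w n i) (θ n • (w n i - w (n-1) i))
    rw [norm_smul, Real.norm_of_nonneg h0] at h2
    have h3 := norm_sub_le (w n i) (w (n-1) i)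
    have h4 := mul_le_of_le_one_left (norm_nonneg (w n i - w (n-1) i)) h1.le
    linarith [hC' n, hC' (n-1)]
  refine ⟨hTb, hxb, hwb, hzb, ?_⟩
  intro i hi
  obtain ⟨C, hC⟩ := hzb i hi
  have hL := hL_pos i hi
  have hg : ∀ n ≥ 1, ‖h' i (z n i)‖ ≤ ‖h' i 0‖ + 1 / L i * C := by
    intro n hn
    have h1 := hh_lip i hi (z n i) 0
    rw [sub_zero] at h1
    have h2 := norm_sub_norm_le (h' i (z n i)) (h' i 0)
    have h3 : 1 / L i * ‖z n i‖ ≤ 1 / L i * C :=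
      mul_le_mul_of_nonneg_left (hC n hn) (by positivity)
    linarith
  refine rec_bdd_aux (fun n => ‖d n i‖) β (‖h' i 0‖ + 1 / L i * C)
    ((norm_nonneg _).trans (hg 1 le_rfl)) (fun n => norm_nonneg _) hβ_lim ?_
  intro n hn
  rw [hd n hn i hi]
  have h2 := norm_add_le (-(h' i (z n i))) (β n • d n i)
  rw [norm_neg, norm_smul, Real.norm_of_nonneg (hβ_range n).1.le] at h2
  linarith [hg n hn]
end

section
/- For the sequence {x_n} generated by Algorithm 1, one has lim_{n→∞} ‖x_{n+1} − x_n‖/λ_n = 0 and lim_{n→∞} ‖x_{n+1} − x_n‖ = 0. -/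
open Filter Topology

theorem aux_grad_ineq {H : Type*} [NormedAddCommGroup H] [InnerProductSpace ℝ H] [CompleteSpace H]
    (h : H → ℝ) (g x y : H) (hc : ConvexOn ℝ Set.univ h) (hg : HasGradientAt h g x) :
    h x + inner ℝ g (y - x) ≤ h y := by
  have hc' : ConvexOn ℝ Set.univ (fun t : ℝ => h (AffineMap.lineMap x y t)) := by
    have := hc.comp_affineMap (AffineMap.lineMap x y : ℝ →ᵃ[ℝ] H)
    simpa [Function.comp_def] using this
  have hd : HasDerivAt (fun t : ℝ => h (AffineMap.lineMap x y t)) (inner ℝ g (y - x)) 0 := by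
    have h1 : HasDerivAt (fun t : ℝ => (AffineMap.lineMap x y t : H)) (y - x) 0 :=
      AffineMap.hasDerivAt_lineMap
    have h2 : HasFDerivAt h (InnerProductSpace.toDual ℝ H g) (AffineMap.lineMap x y (0:ℝ)) := by
      rw [AffineMap.lineMap_apply_zero]; exact hg.hasFDerivAt
    have := h2.comp_hasDerivAt (0:ℝ) h1
    simpa [Function.comp_def] using this
  have := hc'.le_slope_of_hasDerivAt (Set.mem_univ 0) (Set.mem_univ 1) one_pos hd
  simp [slope_def_field] at this
  linarith

theorem aux_coco_half {H : Type*} [NormedAddCommGroup H] [InnerProductSpace ℝ H] [CompleteSpace H]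
    (h : H → ℝ) (h' : H → H) (L : ℝ) (hL : 0 < L) (hc : ConvexOn ℝ Set.univ h)
    (hg : ∀ x, HasGradientAt h (h' x) x)
    (hl : ∀ x y, ‖h' x - h' y‖ ≤ (1 / L) * ‖x - y‖) (x y : H) :
    h x + inner ℝ (h' x) (y - x) + (L / 4) * ‖h' y - h' x‖ ^ 2 ≤ h y := by
  set g := h' y - h' x with hgdef
  set p := y - (L / 2) • g with hp
  have h1 := aux_grad_ineq h (h' x) x p hc (hg x)
  have h2 := aux_grad_ineq h (h' p) p y hc (hg p)
  have h3 : inner ℝ (h' y - h' p) (y - p) ≤ (L / 4) * ‖g‖ ^ 2 := by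
    have e : y - p = (L / 2) • g := by rw [hp]; abel
    have n1 : ‖y - p‖ = (L / 2) * ‖g‖ := by
      rw [e, norm_smul, Real.norm_of_nonneg (by positivity)]
    calc inner ℝ (h' y - h' p) (y - p) ≤ ‖h' y - h' p‖ * ‖y - p‖ := real_inner_le_norm _ _
      _ ≤ ((1 / L) * ‖y - p‖) * ‖y - p‖ := by gcongr; exact hl _ _
      _ = (L / 4) * ‖g‖ ^ 2 := by rw [n1]; field_simp; ring
  have e : y - p = (L / 2) • g := by rw [hp]; abel
  have e2 : p - x = (y - x) - (L / 2) • g := by rw [hp]; abel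
  rw [e2, inner_sub_right, inner_smul_right] at h1
  rw [e, inner_smul_right] at h2
  rw [e, inner_smul_right, inner_sub_left] at h3
  have h4 : inner ℝ (h' y) g - inner ℝ (h' x) g = ‖g‖ ^ 2 := by
    rw [← inner_sub_left, ← hgdef, real_inner_self_eq_norm_sq]
  have h5 : (L / 2) * inner ℝ (h' y) g = (L / 2) * inner ℝ (h' x) g + (L / 2) * ‖g‖ ^ 2 := by
    rw [← h4]; ring
  linarith

theorem aux_grad_step {H : Type*} [NormedAddCommGroup H] [InnerProductSpace ℝ H] [CompleteSpace H]
    (h : H → ℝ) (h' : H → H) (L : ℝ) (hL : 0 < L) (hc : ConvexOn ℝ Set.univ h)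
    (hg : ∀ x, HasGradientAt h (h' x) x)
    (hl : ∀ x y, ‖h' x - h' y‖ ≤ (1 / L) * ‖x - y‖) (x y : H) (l : ℝ) (hl0 : 0 < l) (hlL : l ≤ L) :
    ‖(y - x) - l • (h' y - h' x)‖ ≤ ‖y - x‖ := by
  have h1 := aux_coco_half h h' L hL hc hg hl x y
  have h2 := aux_coco_half h h' L hL hc hg hl y x
  rw [norm_sub_rev (h' x)] at h2
  have e : x - y = -(y - x) := by abel
  rw [e, inner_neg_right] at h2
  have h3 : (L / 2) * ‖h' y - h' x‖ ^ 2 ≤ inner ℝ (y - x) (h' y - h' x) := by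
    rw [real_inner_comm, inner_sub_left]; linarith
  apply le_of_sq_le_sq _ (norm_nonneg _) 
  rw [norm_sub_sq_real, inner_smul_right, norm_smul, Real.norm_of_nonneg hl0.le]
  have h4 := mul_le_mul_of_nonneg_left h3 hl0.le
  have h5 : l * l * ‖h' y - h' x‖ ^ 2 ≤ l * L * ‖h' y - h' x‖ ^ 2 := by gcongr
  nlinarith

theorem aux_prox_var {H : Type*} [NormedAddCommGroup H] [InnerProductSpace ℝ H]
    (f : H → ℝ) (hf : ConvexOn ℝ Set.univ f) (l : ℝ) (hl : 0 < l) (v y : H)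
    (hy : ∀ u, f y + (1 / (2 * l)) * ‖v - y‖ ^ 2 ≤ f u + (1 / (2 * l)) * ‖v - u‖ ^ 2) (u : H) :
    inner ℝ (v - y) (u - y) ≤ l * (f u - f y) := by
  have key : ∀ t : ℝ, 0 < t → t ≤ 1 →
      inner ℝ (v - y) (u - y) ≤ l * (f u - f y) + t * (‖u - y‖ ^ 2 / 2) := by
    intro t ht ht1
    have h1 := hy (y + t • (u - y))
    have h2 := hf.2 (Set.mem_univ y) (Set.mem_univ u) (sub_nonneg.2 ht1) ht.le (by ring)
    have e : (1 - t) • y + t • u = y + t • (u - y) := by module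
    rw [e] at h2
    simp only [smul_eq_mul] at h2
    have e2 : v - (y + t • (u - y)) = (v - y) - t • (u - y) := by abel
    rw [e2, norm_sub_sq_real (v - y), inner_smul_right, norm_smul, Real.norm_of_nonneg ht.le] at h1
    have h3 : (1 / (2 * l)) * (2 * (t * inner ℝ (v - y) (u - y)) - (t * ‖u - y‖) ^ 2)
        ≤ t * (f u - f y) := by nlinarith
    rw [one_div, inv_mul_le_iff₀ (by positivity)] at h3
    have h4 : t * (inner ℝ (v - y) (u - y)) ≤
      t * (l * (f u - f y) + t * (‖u - y‖ ^ 2 / 2)) := by nlinarith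
    exact le_of_mul_le_mul_left h4 ht
  have hlim : Tendsto (fun t : ℝ => l * (f u - f y) + t * (‖u - y‖ ^ 2 / 2)) (𝓝[>] 0)
      (𝓝 (l * (f u - f y) + 0 * (‖u - y‖ ^ 2 / 2))) := by
    apply Tendsto.mono_left _ nhdsWithin_le_nhds
    exact Continuous.tendsto (by fun_prop) 0
  have := ge_of_tendsto hlim (b := inner ℝ (v - y) (u - y)) (by
    filter_upwards [Ioc_mem_nhdsGT (zero_lt_one' ℝ)] with t ht
    exact key t ht.1 ht.2)
  simpa using this

theorem aux_prox_two {H : Type*} [NormedAddCommGroup H] [InnerProductSpace ℝ H]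
    (f : H → ℝ) (hf : ConvexOn ℝ Set.univ f) (l0 l1 : ℝ) (hl0 : 0 < l0) (hl1 : 0 < l1)
    (v0 y0 v1 y1 : H)
    (hy0 : ∀ u, f y0 + (1 / (2 * l0)) * ‖v0 - y0‖ ^ 2 ≤ f u + (1 / (2 * l0)) * ‖v0 - u‖ ^ 2)
    (hy1 : ∀ u, f y1 + (1 / (2 * l1)) * ‖v1 - y1‖ ^ 2 ≤ f u + (1 / (2 * l1)) * ‖v1 - u‖ ^ 2) :
    ‖y1 - y0‖ ≤ ‖v1 - y0 - (l1 / l0) • (v0 - y0)‖ := by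
  have h0 := aux_prox_var f hf l0 hl0 v0 y0 hy0 y1
  have h1 := aux_prox_var f hf l1 hl1 v1 y1 hy1 y0
  have h2 : (l1 / l0) * inner ℝ (v0 - y0) (y1 - y0) ≤ l1 * (f y1 - f y0) := by
    have := mul_le_mul_of_nonneg_left h0 (div_pos hl1 hl0).le
    have e : l1 / l0 * (l0 * (f y1 - f y0)) = l1 * (f y1 - f y0) := by field_simp
    linarith
  have e1 : inner ℝ (v1 - y1) (y0 - y1) = ‖y1 - y0‖ ^ 2 - inner ℝ (v1 - y0) (y1 - y0) := by
    have : v1 - y1 = (v1 - y0) - (y1 - y0) := by abel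
    rw [this, ← neg_sub y1 y0, inner_neg_right, inner_sub_left, real_inner_self_eq_norm_sq]
    ring
  have h3 : ‖y1 - y0‖ ^ 2 ≤ inner ℝ (v1 - y0 - (l1 / l0) • (v0 - y0)) (y1 - y0) := by
    rw [inner_sub_left, real_inner_smul_left]; linarith
  have h4 := h3.trans (real_inner_le_norm _ _)
  by_contra hlt
  push Not at hlt
  have : 0 < ‖y1 - y0‖ := (norm_nonneg _).trans_lt hlt
  nlinarith

theorem aux_xu (b a δ : ℕ → ℝ) (hb : ∀ n, 0 ≤ b n) (ha : ∀ n, 0 < a n ∧ a n ≤ 1)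
    (hs : ¬ Summable a) (hδ : Tendsto δ atTop (𝓝 0))
    (h : ∀ᶠ n in atTop, b (n + 1) ≤ (1 - a n) * b n + a n * δ n) : Tendsto b atTop (𝓝 0) := by
  rw [Metric.tendsto_atTop]
  intro ε hε
  obtain ⟨N, hN⟩ := eventually_atTop.1 (h.and (hδ.eventually (gt_mem_nhds (half_pos hε))))
  have hind : ∀ k, b (N + k) - ε / 2 ≤ b N * Real.exp (-∑ j ∈ Finset.range k, a (j + N)) := by
    intro k
    induction k with
    | zero => simp; linarith
    | succ k ih =>
      obtain ⟨h1, h2⟩ := hN (N + k) (by omega)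
      rw [Finset.sum_range_succ, neg_add, Real.exp_add]
      have e : k + N = N + k := by omega
      rw [e]
      have h3 := Real.add_one_le_exp (-a (N + k))
      obtain ⟨p1, p2⟩ := ha (N + k)
      have h4 : b (N + (k+1)) - ε / 2 ≤ (1 - a (N + k)) * (b (N + k) - ε / 2) := by
        rw [← add_assoc]; nlinarith
      set E := b N * Real.exp (-∑ j ∈ Finset.range k, a (j + N)) with hE
      have hE0 : 0 ≤ E := mul_nonneg (hb N) (Real.exp_pos _).le
      calc _ ≤ _ := h4
        _ ≤ (1 - a (N + k)) * E := by gcongr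
        _ ≤ Real.exp (-a (N + k)) * E := by gcongr; try linarith
        _ = _ := by rw [hE]; ring
  have hs' : ¬ Summable (fun j => a (j + N)) := by rwa [summable_nat_add_iff]
  have ht := (not_summable_iff_tendsto_nat_atTop_of_nonneg (fun j => (ha (j + N)).1.le)).1 hs'
  have ht2 : Tendsto (fun k => b N * Real.exp (-∑ j ∈ Finset.range k, a (j + N))) atTop
      (𝓝 (b N * 0)) :=
    (Real.tendsto_exp_neg_atTop_nhds_zero.comp ht).const_mul _
  rw [mul_zero] at ht2
  obtain ⟨K, hK⟩ := eventually_atTop.1 (ht2.eventually (gt_mem_nhds (half_pos hε)))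
  refine ⟨N + K, fun n hn => ?_⟩
  obtain ⟨k, rfl⟩ := Nat.exists_eq_add_of_le (show N ≤ n by omega)
  have := hK k (by omega)
  have := hind k
  rw [Real.dist_eq, sub_zero, abs_of_nonneg (hb _)]
  linarith

theorem aux_seq_step {H : Type*} [NormedAddCommGroup H] [InnerProductSpace ℝ H] [CompleteSpace H]
    (f h : H → ℝ) (h' T : H → H) (L : ℝ)
    (hf : ConvexOn ℝ Set.univ f) (hc : ConvexOn ℝ Set.univ h)
    (hg : ∀ x, HasGradientAt h (h' x) x) (hL : 0 < L)
    (hl : ∀ x y, ‖h' x - h' y‖ ≤ (1 / L) * ‖x - y‖)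
    (hT : ∀ x y : H, ‖T x - T y‖ ^ 2 ≤ inner ℝ (T x - T y) (x - y))
    (θ lam β α : ℕ → ℝ)
    (hθ_range : ∀ n, 0 ≤ θ n ∧ θ n < 1)
    (hlam_pos : ∀ n, 0 < lam n)
    (hβ_range : ∀ n, 0 < β n ∧ β n ≤ 1)
    (hα_range : ∀ n, 0 < α n ∧ α n ≤ 1)
    (hθ_anti : Antitone θ) (hlam_anti : Antitone lam)
    (hβ_anti : Antitone β) (hα_anti : Antitone α)
    (hlam_lim : Tendsto lam atTop (𝓝 0))
    (hβ_lim : Tendsto β atTop (𝓝 0))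
    (w wp z y d : ℕ → H) (u : H)
    (hz : ∀ n ≥ 1, z n = w n + θ n • (w n - w (n-1)))
    (hd : ∀ n ≥ 1, d (n+1) = -(h' (z n)) + β n • d n)
    (hy : ∀ n ≥ 1, ∀ v : H,
      f (y n) + (1 / (2 * lam n)) * ‖z n + lam n • d (n+1) - y n‖ ^ 2
        ≤ f v + (1 / (2 * lam n)) * ‖z n + lam n • d (n+1) - v‖ ^ 2)
    (hw : ∀ n ≥ 1, wp n = α n • u + (1 - α n) • T (y n))
    (C : ℝ) (hwb : ∀ n, ‖w n‖ ≤ C) (Cy : ℝ) (hyb : ∀ n ≥ 1, ‖y n‖ ≤ Cy) :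
    ∃ K, 0 ≤ K ∧ ∀ᶠ n in atTop, ‖wp (n+1) - wp n‖ ≤ (1 - α (n+1)) * ‖w (n+1) - w n‖
      + K * (θ n + lam (n+1) * β n + (1 - lam (n+1) / lam n) + (α n - α (n+1))) := by
  have hTn : ∀ a b, ‖T a - T b‖ ≤ ‖a - b‖ := by
    intro a b
    have := (hT a b).trans (real_inner_le_norm _ _)
    by_contra hlt
    push Not at hlt
    have : 0 < ‖T a - T b‖ := (norm_nonneg _).trans_lt hlt
    nlinarith
  have hC : 0 ≤ C := (norm_nonneg _).trans (hwb 0)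
  have hCy : 0 ≤ Cy := (norm_nonneg _).trans (hyb 1 le_rfl)
  have hwd : ∀ m n, ‖w m - w n‖ ≤ 2 * C := fun m n => by
    linarith [norm_sub_le (w m) (w n), hwb m, hwb n]
  have hθw : ∀ k m n, ‖θ k • (w m - w n)‖ ≤ 2 * C * θ k := fun k m n => by
    rw [norm_smul, Real.norm_of_nonneg (hθ_range k).1, mul_comm]
    exact mul_le_mul_of_nonneg_right (hwd m n) (hθ_range k).1
  have hzb : ∀ n ≥ 1, ‖z n‖ ≤ 3 * C := by
    intro n hn
    rw [hz n hn]
    have := norm_add_le (w n) (θ n • (w n - w (n-1)))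
    have := hθw n n (n-1)
    have := hwb n
    have := (hθ_range n).2
    nlinarith
  obtain ⟨G, hG0, hG⟩ : ∃ G, 0 ≤ G ∧ ∀ n ≥ 1, ‖h' (z n)‖ ≤ G := by
    refine ⟨‖h' 0‖ + (1 / L) * (3 * C), by positivity, fun n hn => ?_⟩
    have h1 := hl (z n) 0
    have h2 : (1 / L) * ‖z n - 0‖ ≤ (1 / L) * (3 * C) := by
      rw [sub_zero]; gcongr; exact hzb n hn
    have := norm_le_norm_add_norm_sub' (h' (z n)) (h' 0)
    linarith
  obtain ⟨N1, hN1⟩ := eventually_atTop.1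
    (hβ_lim.eventually (gt_mem_nhds (show (0:ℝ) < 1/2 by norm_num)))
  obtain ⟨D, hD0, hD⟩ : ∃ D, 0 ≤ D ∧ ∀ n ≥ N1 + 1, ‖d n‖ ≤ D := by
    refine ⟨max ‖d (N1+1)‖ (2 * G), by positivity, fun n hn => ?_⟩
    induction n, hn using Nat.le_induction with
    | base => exact le_max_left _ _
    | succ n hn ih =>
      rw [hd n (by omega)]
      have h1 := norm_add_le (-(h' (z n))) (β n • d n)
      rw [norm_neg, norm_smul, Real.norm_of_nonneg (hβ_range n).1.le] at h1
      have h2 := hG n (by omega)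
      have h3 := hN1 n (by omega)
      have h4 := le_max_right ‖d (N1+1)‖ (2 * G)
      have h5 : β n * ‖d n‖ ≤ (1/2) * max ‖d (N1+1)‖ (2 * G) := by gcongr
      linarith
  obtain ⟨N2, hN2⟩ := eventually_atTop.1 (hlam_lim.eventually (gt_mem_nhds hL))
  refine ⟨4 * C + 2 * D + (3 * C + Cy) + (‖T 0‖ + Cy + ‖u‖), by positivity, ?_⟩
  filter_upwards [eventually_ge_atTop (N1 + N2 + 1)] with n hn
  have hn1 : n ≥ 1 := by omega
  have hyy := aux_prox_two f hf (lam n) (lam (n+1)) (hlam_pos n) (hlam_pos _) _ _ _ _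
    (hy n hn1) (hy (n+1) (by omega))
  have hgs := aux_grad_step h h' L hL hc hg hl (z n) (z (n+1)) (lam (n+1)) (hlam_pos _)
    (hN2 (n+1) (by omega)).le
  have hr1 : lam (n+1) / lam n ≤ 1 := by
    rw [div_le_one (hlam_pos n)]; exact hlam_anti (Nat.le_succ n)
  have hcancel : (lam (n+1) / lam n) • (lam n • d (n+1)) = lam (n+1) • d (n+1) := by
    rw [smul_smul, div_mul_cancel₀ _ (hlam_pos n).ne']
  set r := lam (n+1) / lam n with hr
  have e1 : z (n+1) + lam (n+1) • d (n+1+1) - y n - r • (z n + lam n • d (n+1) - y n)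
      = ((z (n+1) - z n) - lam (n+1) • (h' (z (n+1)) - h' (z n)))
        + lam (n+1) • (β (n+1) • d (n+1) - β n • d n) + (1 - r) • (z n - y n) := by
    have : r • (z n + lam n • d (n+1) - y n) = r • (z n - y n) + lam (n+1) • d (n+1) := by
      rw [← hcancel]; module
    rw [this, hd (n+1) (by omega)]
    nth_rewrite 2 [hd n hn1]
    module
  rw [e1] at hyy
  have b0 := (hβ_range n).1
  have b1 := (hβ_range (n+1)).1
  have bm := hβ_anti (Nat.le_succ n)
  have l1 := hlam_pos (n+1)
  have hbd : ‖lam (n+1) • (β (n+1) • d (n+1) - β n • d n)‖ ≤ 2 * D * (lam (n+1) * β n) := by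
    rw [norm_smul, Real.norm_of_nonneg l1.le]
    have h1 := norm_sub_le (β (n+1) • d (n+1)) (β n • d n)
    rw [norm_smul, norm_smul, Real.norm_of_nonneg b0.le, Real.norm_of_nonneg b1.le] at h1
    have h2 : β (n+1) * ‖d (n+1)‖ ≤ β n * D := by
      gcongr
      exact hD _ (by omega)
    have h3 : β n * ‖d n‖ ≤ β n * D := by gcongr; exact hD _ (by omega)
    calc _ ≤ lam (n+1) * (β n * D + β n * D) := by gcongr; linarith
      _ = _ := by ring
  have hzy : ‖(1 - r) • (z n - y n)‖ ≤ (3 * C + Cy) * (1 - r) := by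
    rw [norm_smul, Real.norm_of_nonneg (by linarith), mul_comm]
    have := norm_sub_le (z n) (y n)
    have := hzb n hn1
    have := hyb n hn1
    exact mul_le_mul_of_nonneg_right (by linarith) (by linarith)
  have hzz : ‖z (n+1) - z n‖ ≤ ‖w (n+1) - w n‖ + 4 * C * θ n := by
    have e : z (n+1) - z n = (w (n+1) - w n) + θ (n+1) • (w (n+1) - w n)
        - θ n • (w n - w (n-1)) := by
      rw [hz (n+1) (by omega), hz n hn1, Nat.add_sub_cancel]; abel
    rw [e]
    have h1 := norm_sub_le ((w (n+1) - w n) + θ (n+1) • (w (n+1) - w n)) (θ n • (w n - w (n-1)))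
    have h2 := norm_add_le (w (n+1) - w n) (θ (n+1) • (w (n+1) - w n))
    have h3 := hθw (n+1) (n+1) n
    have h4 := hθw n n (n-1)
    have h5 : 2 * C * θ (n+1) ≤ 2 * C * θ n := by gcongr; exact hθ_anti (Nat.le_succ n)
    linarith
  have hyf : ‖y (n+1) - y n‖ ≤ ‖w (n+1) - w n‖ + 4 * C * θ n + 2 * D * (lam (n+1) * β n)
      + (3 * C + Cy) * (1 - r) := by
    refine hyy.trans ?_
    have h1 := norm_add₃_le (a := (z (n+1) - z n) - lam (n+1) • (h' (z (n+1)) - h' (z n)))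
      (b := lam (n+1) • (β (n+1) • d (n+1) - β n • d n)) (c := (1 - r) • (z n - y n))
    linarith
  have a1 := hα_range (n+1)
  have am : α (n+1) ≤ α n := hα_anti (Nat.le_succ n)
  have hTu : ‖T (y n) - u‖ ≤ ‖T 0‖ + Cy + ‖u‖ := by
    have h1 := norm_sub_le (T (y n)) u
    have h2 := norm_le_norm_add_norm_sub' (T (y n)) (T 0)
    have h3 := hTn (y n) 0
    have h4 := hyb n hn1
    rw [sub_zero] at h3
    linarith
  have e2 : wp (n+1) - wp n = (1 - α (n+1)) • (T (y (n+1)) - T (y n))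
      + (α n - α (n+1)) • (T (y n) - u) := by
    rw [hw (n+1) (by omega), hw n hn1]; module
  have h1 : ‖wp (n+1) - wp n‖ ≤ (1 - α (n+1)) * ‖y (n+1) - y n‖
      + (‖T 0‖ + Cy + ‖u‖) * (α n - α (n+1)) := by
    rw [e2]
    refine (norm_add_le _ _).trans ?_
    rw [norm_smul, norm_smul, Real.norm_of_nonneg (by linarith), Real.norm_of_nonneg (by linarith),
      mul_comm (α n - α (n+1))]
    exact add_le_add (mul_le_mul_of_nonneg_left (hTn _ _) (by linarith))
      (mul_le_mul_of_nonneg_right hTu (by linarith))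
  set Q := 4 * C * θ n + 2 * D * (lam (n+1) * β n) + (3 * C + Cy) * (1 - r) with hQ
  have t0 := (hθ_range n).1
  have r0 : 0 ≤ 1 - r := by linarith
  have lb : 0 ≤ lam (n+1) * β n := by positivity
  have a0 : 0 ≤ α n - α (n+1) := by linarith
  have hQ0 : 0 ≤ Q := by positivity
  have h2 : (1 - α (n+1)) * ‖y (n+1) - y n‖ ≤ (1 - α (n+1)) * ‖w (n+1) - w n‖ + Q := by
    have : (1 - α (n+1)) * ‖y (n+1) - y n‖ ≤ (1 - α (n+1)) * (‖w (n+1) - w n‖ + Q) :=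
      mul_le_mul_of_nonneg_left (by linarith) (by linarith)
    nlinarith
  set s := θ n + lam (n+1) * β n + (1 - r) + (α n - α (n+1)) with hs
  have q1 : 4 * C * θ n ≤ 4 * C * s := by gcongr; linarith
  have q2 : 2 * D * (lam (n+1) * β n) ≤ 2 * D * s := by gcongr; linarith
  have q3 : (3 * C + Cy) * (1 - r) ≤ (3 * C + Cy) * s := by gcongr; linarith
  have q4 : (‖T 0‖ + Cy + ‖u‖) * (α n - α (n+1)) ≤ (‖T 0‖ + Cy + ‖u‖) * s := by gcongr; linarith
  linarith

theorem alg1_successive_differences_tendsto_zero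
    {H : Type*} [NormedAddCommGroup H] [InnerProductSpace ℝ H] [CompleteSpace H]
    (M : ℕ) (hM : 1 ≤ M)
    (f h : ℕ → H → ℝ) (h' : ℕ → H → H) (L : ℕ → ℝ) (T : ℕ → H → H)
    (hf_cont : ∀ i ∈ Finset.Icc 1 M, Continuous (f i))
    (hf_conv : ∀ i ∈ Finset.Icc 1 M, ConvexOn ℝ Set.univ (f i))
    (hh_conv : ∀ i ∈ Finset.Icc 1 M, ConvexOn ℝ Set.univ (h i))
    (hh_grad : ∀ i ∈ Finset.Icc 1 M, ∀ x : H, HasGradientAt (h i) (h' i x) x)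
    (hL_pos : ∀ i ∈ Finset.Icc 1 M, 0 < L i)
    (hh_lip : ∀ i ∈ Finset.Icc 1 M, ∀ x y : H, ‖h' i x - h' i y‖ ≤ (1 / L i) * ‖x - y‖)
    (hT_firm : ∀ i ∈ Finset.Icc 1 M, ∀ x y : H,
      ‖T i x - T i y‖ ^ 2 ≤ @inner ℝ H _ (T i x - T i y) (x - y))
    (S : Set H) (hS : S = ⋂ i ∈ Finset.Icc 1 M, {x : H | T i x = x}) (hS_ne : S.Nonempty)
    (θ lam β α : ℕ → ℝ) (σ : ℝ) (hσ : 1 ≤ σ)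
    (hθ_range : ∀ n, 0 ≤ θ n ∧ θ n < 1)
    (hlam_pos : ∀ n, 0 < lam n)
    (hlam_le : ∀ n, ∀ i ∈ Finset.Icc 1 M, lam n ≤ 2 * L i)
    (hβ_range : ∀ n, 0 < β n ∧ β n ≤ 1)
    (hα_range : ∀ n, 0 < α n ∧ α n ≤ 1)
    (hθ_anti : Antitone θ) (hlam_anti : Antitone lam)
    (hβ_anti : Antitone β) (hα_anti : Antitone α)
    (hθ_lim : Tendsto θ atTop (𝓝 0)) (hlam_lim : Tendsto lam atTop (𝓝 0))
    (hβ_lim : Tendsto β atTop (𝓝 0)) (hα_lim : Tendsto α atTop (𝓝 0))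
    (hC1 : ¬ Summable α)
    (hC2 : Tendsto (fun n => (1 / α (n+1)) * |1 / lam (n+1) - 1 / lam n|) atTop (𝓝 0))
    (hC3 : Tendsto (fun n => (1 / lam (n+1)) * |1 - α n / α (n+1)|) atTop (𝓝 0))
    (hC4 : Tendsto (fun n => α n / lam n) atTop (𝓝 0))
    (hC5 : Tendsto (fun n => θ n / (α (n+1) * lam (n+1))) atTop (𝓝 0))
    (hC6 : ∀ n, lam n / lam (n+1) ≤ σ)
    (hC7 : Tendsto (fun n => β n / α (n+1)) atTop (𝓝 0))
    (x : ℕ → H) (w z y d : ℕ → ℕ → H) (u : ℕ → H)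
    (hd1 : ∀ i ∈ Finset.Icc 1 M, d 1 i = -(h' i (z 0 i)))
    (hw1 : ∀ n ≥ 1, w n 1 = x n)
    (hz : ∀ n ≥ 1, ∀ i ∈ Finset.Icc 1 M, z n i = w n i + θ n • (w n i - w (n-1) i))
    (hd : ∀ n ≥ 1, ∀ i ∈ Finset.Icc 1 M, d (n+1) i = -(h' i (z n i)) + β n • d n i)
    (hy : ∀ n ≥ 1, ∀ i ∈ Finset.Icc 1 M, ∀ v : H,
      f i (y n i) + (1 / (2 * lam n)) * ‖z n i + lam n • d (n+1) i - y n i‖ ^ 2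
        ≤ f i v + (1 / (2 * lam n)) * ‖z n i + lam n • d (n+1) i - v‖ ^ 2)
    (hw : ∀ n ≥ 1, ∀ i ∈ Finset.Icc 1 M,
      w n (i+1) = α n • u i + (1 - α n) • T i (y n i))
    (hx : ∀ n ≥ 1, x (n+1) = w n (M+1))
    (hy_bdd : ∀ i ∈ Finset.Icc 1 M, ∃ C, ∀ n ≥ 1, ‖y n i‖ ≤ C)
    : Tendsto (fun n => ‖x (n+1) - x n‖ / lam n) atTop (𝓝 0) ∧
      Tendsto (fun n => ‖x (n+1) - x n‖) atTop (𝓝 0) := by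
  have hbdd : ∀ (v : ℕ → H) (C : ℝ) (N : ℕ), (∀ n ≥ N, ‖v n‖ ≤ C) → ∃ C', ∀ n, ‖v n‖ ≤ C' := by
    intro v C N hv
    refine ⟨|C| + ∑ j ∈ Finset.range N, ‖v j‖, fun n => ?_⟩
    have hs : 0 ≤ ∑ j ∈ Finset.range N, ‖v j‖ := Finset.sum_nonneg fun _ _ => norm_nonneg _
    by_cases hn : n < N
    · have := Finset.single_le_sum (f := fun j => ‖v j‖) (fun _ _ => norm_nonneg _)
        (Finset.mem_range.2 hn)
      have := abs_nonneg C
      linarith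
    · have := hv n (by omega)
      have := le_abs_self C
      linarith
  have hTn : ∀ i ∈ Finset.Icc 1 M, ∀ a b, ‖T i a - T i b‖ ≤ ‖a - b‖ := by
    intro i hi a b
    have := (hT_firm i hi a b).trans (real_inner_le_norm _ _)
    by_contra hlt
    push Not at hlt
    have : 0 < ‖T i a - T i b‖ := (norm_nonneg _).trans_lt hlt
    nlinarith
  have hwsucc : ∀ i ∈ Finset.Icc 1 M, ∃ C, ∀ n ≥ 1, ‖w n (i+1)‖ ≤ C := by
    intro i hi
    obtain ⟨C, hC⟩ := hy_bdd i hi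
    refine ⟨‖u i‖ + (‖T i 0‖ + C), fun n hn => ?_⟩
    rw [hw n hn i hi]
    obtain ⟨a0, a1⟩ := hα_range n
    refine (norm_add_le _ _).trans ?_
    rw [norm_smul, norm_smul, Real.norm_of_nonneg a0.le, Real.norm_of_nonneg (by linarith)]
    have h1 := norm_le_norm_add_norm_sub' (T i (y n i)) (T i 0)
    have h2 := hTn i hi (y n i) 0
    rw [sub_zero] at h2
    have h3 := hC n hn
    have h4 := norm_nonneg (u i)
    have h5 := norm_nonneg (T i (y n i))
    nlinarith
  have hwb : ∀ i ∈ Finset.Icc 1 M, ∃ C, ∀ n, ‖w n i‖ ≤ C := by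
    intro i hi
    rw [Finset.mem_Icc] at hi
    rcases Nat.lt_or_ge 1 i with h1 | h1
    · obtain ⟨C, hC⟩ := hwsucc (i-1) (Finset.mem_Icc.2 ⟨by omega, by omega⟩)
      rw [Nat.sub_add_cancel hi.1] at hC
      exact hbdd _ C 1 hC
    · have : i = 1 := by omega
      subst this
      obtain ⟨C, hC⟩ := hwsucc M (Finset.mem_Icc.2 ⟨hM, le_rfl⟩)
      refine hbdd _ C 2 fun n hn => ?_
      have := hC (n-1) (by omega)
      rw [← hx (n-1) (by omega), Nat.sub_add_cancel (by omega)] at this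
      rwa [hw1 n (by omega)]
  set s : ℕ → ℝ := fun n =>
    θ n + lam (n+1) * β n + (1 - lam (n+1) / lam n) + (α n - α (n+1)) with hs
  have hs0 : ∀ n, 0 ≤ s n := by
    intro n
    have h1 := (hθ_range n).1
    have h2 := mul_pos (hlam_pos (n+1)) (hβ_range n).1
    have h3 : lam (n+1) / lam n ≤ 1 := by
      rw [div_le_one (hlam_pos n)]; exact hlam_anti (Nat.le_succ n)
    have h4 : α (n+1) ≤ α n := hα_anti (Nat.le_succ n)
    simp only [hs]
    linarith
  have hstep : ∀ i ∈ Finset.Icc 1 M, ∃ K, 0 ≤ K ∧ ∀ᶠ n in atTop,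
      ‖w (n+1) (i+1) - w n (i+1)‖ ≤ (1 - α (n+1)) * ‖w (n+1) i - w n i‖ + K * s n := by
    intro i hi
    obtain ⟨C, hC⟩ := hwb i hi
    obtain ⟨Cy, hCy⟩ := hy_bdd i hi
    exact aux_seq_step (f i) (h i) (h' i) (T i) (L i) (hf_conv i hi) (hh_conv i hi) (hh_grad i hi)
      (hL_pos i hi) (hh_lip i hi) (hT_firm i hi) θ lam β α hθ_range hlam_pos hβ_range hα_range
      hθ_anti hlam_anti hβ_anti hα_anti hlam_lim hβ_lim (fun n => w n i) (fun n => w n (i+1))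
      (fun n => z n i) (fun n => y n i) (fun n => d n i) (u i) (fun n hn => hz n hn i hi)
      (fun n hn => hd n hn i hi) (fun n hn => hy n hn i hi) (fun n hn => hw n hn i hi) C hC Cy hCy
  have hchain : ∀ i, 1 ≤ i → i ≤ M → ∃ K, 0 ≤ K ∧ ∀ᶠ n in atTop,
      ‖w (n+1) (i+1) - w n (i+1)‖ ≤ (1 - α (n+1)) * ‖w (n+1) 1 - w n 1‖ + K * s n := by
    intro i hi
    induction i, hi using Nat.le_induction with
    | base => exact fun h1 => hstep 1 (Finset.mem_Icc.2 ⟨le_rfl, h1⟩)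
    | succ i hi ih =>
      intro hiM
      obtain ⟨K1, hK1, h1⟩ := ih (by omega)
      obtain ⟨K2, hK2, h2⟩ := hstep (i+1) (Finset.mem_Icc.2 ⟨by omega, hiM⟩)
      refine ⟨K1 + K2, by positivity, ?_⟩
      filter_upwards [h1, h2] with n h1 h2
      have h3 := norm_nonneg (w (n+1) (i+1) - w n (i+1))
      have h4 := (hα_range (n+1)).1
      have := hs0 n
      nlinarith
  obtain ⟨K, hK, hrec⟩ := hchain M hM le_rfl
  obtain ⟨C, hC⟩ := hwb 1 (Finset.mem_Icc.2 ⟨le_rfl, hM⟩)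
  have hC0 : 0 ≤ C := (norm_nonneg _).trans (hC 0)
  set b : ℕ → ℝ := fun n => ‖x (n+1) - x n‖ / lam n with hb
  set δ : ℕ → ℝ := fun n =>
    2 * C * ((1 / α (n+1)) * |1 / lam (n+1) - 1 / lam n|) +
    K * (θ n / (α (n+1) * lam (n+1)) + β n / α (n+1) +
      (1 / α (n+1)) * |1 / lam (n+1) - 1 / lam n| +
      (1 / lam (n+1)) * |1 - α n / α (n+1)|) with hδ
  have hδ0 : Tendsto δ atTop (𝓝 0) := by
    have := (hC2.const_mul (2 * C)).add ((((hC5.add hC7).add hC2).add hC3).const_mul K)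
    simpa [hδ] using this
  have hb0 : Tendsto b atTop (𝓝 0) := by
    refine aux_xu b (fun n => α (n+1)) δ (fun n => div_nonneg (norm_nonneg _) (hlam_pos n).le)
      (fun n => hα_range (n+1)) (by rwa [summable_nat_add_iff 1]) hδ0 ?_
    filter_upwards [hrec, eventually_ge_atTop 1] with n hn hn1
    have hCn : ‖x (n+1) - x n‖ ≤ 2 * C := by
      rw [← hw1 n hn1, ← hw1 (n+1) (by omega)]
      linarith [norm_sub_le (w (n+1) 1) (w n 1), hC n, hC (n+1)]
    rw [← hx n hn1, ← hx (n+1) (by omega), hw1 n hn1, hw1 (n+1) (by omega)] at hn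
    have l0 := hlam_pos n
    have l1 := hlam_pos (n+1)
    obtain ⟨a1, a1'⟩ := hα_range (n+1)
    have am : α (n+1) ≤ α n := hα_anti (Nat.le_succ n)
    have lm : lam (n+1) ≤ lam n := hlam_anti (Nat.le_succ n)
    have hinv : 0 ≤ 1 / lam (n+1) - 1 / lam n := by
      rw [sub_nonneg]; exact one_div_le_one_div_of_le l1 lm
    have hrat : 1 - α n / α (n+1) ≤ 0 := by
      rw [sub_nonpos, one_le_div a1]; exact am
    have hαδ : α (n+1) * δ n = 2 * C * (1 / lam (n+1) - 1 / lam n) + K * (s n / lam (n+1)) := by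
      simp only [hδ, hs]
      rw [abs_of_nonneg hinv, abs_of_nonpos hrat]
      field_simp
      ring
    rw [hαδ]
    simp only [hb]
    set A := ‖x (n+1) - x n‖ with hA
    have hA0 : 0 ≤ A := norm_nonneg _
    calc ‖x (n+1+1) - x (n+1)‖ / lam (n+1) ≤ ((1 - α (n+1)) * A + K * s n) / lam (n+1) := by
          gcongr
      _ = (1 - α (n+1)) * (A / lam n) + (1 - α (n+1)) * (A * (1 / lam (n+1) - 1 / lam n))
          + K * (s n / lam (n+1)) := by field_simp; ring
      _ ≤ (1 - α (n+1)) * (A / lam n) + (2 * C * (1 / lam (n+1) - 1 / lam n))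
          + K * (s n / lam (n+1)) := by
          have h1 : A * (1 / lam (n+1) - 1 / lam n) ≤ 2 * C * (1 / lam (n+1) - 1 / lam n) :=
            mul_le_mul_of_nonneg_right hCn hinv
          have h2 : 0 ≤ A * (1 / lam (n+1) - 1 / lam n) := mul_nonneg hA0 hinv
          nlinarith
      _ = _ := by ring
  refine ⟨hb0, ?_⟩
  have := hb0.mul hlam_lim
  rw [mul_zero] at this
  refine this.congr fun n => ?_
  simp only [hb]
  exact div_mul_cancel₀ _ (hlam_pos n).ne'
end

section
/- For every x̄ ∈ S and every i ∈ I, there exist constants Q₁ ≥ 0 and Q₂ ≥ 0 such that for all n ≥ 1, ‖w_n^{(i+1)} − x̄‖² ≤ ‖w_n^{(i)} − x̄‖² + θ_n·Q₁ + α_n·Q₂ − (1 − α_n)·‖T_i(y_n^{(i)}) − y_n^{(i)}‖² − ‖z_n^{(i)} − y_n^{(i)}‖² + 2λ_n·(f_i(x̄) − f_i(y_n^{(i)})) + 2λ_n·⟨d_{n+1}^{(i)}, y_n^{(i)} − x̄⟩, where the sequences are generated by Algorithm 1. -/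
open Filter Topology

theorem aux_prox {H : Type*} [NormedAddCommGroup H] [InnerProductSpace ℝ H]
    (g : H → ℝ) (hg : ConvexOn ℝ Set.univ g) (l : ℝ) (hl : 0 < l) (z d y q : H)
    (hy : ∀ v : H, g y + (1 / (2 * l)) * ‖z + l • d - y‖ ^ 2
        ≤ g v + (1 / (2 * l)) * ‖z + l • d - v‖ ^ 2) :
    ‖y - q‖ ^ 2 ≤ ‖z - q‖ ^ 2 - ‖z - y‖ ^ 2 + 2 * l * (g q - g y)
      + 2 * l * @inner ℝ H _ d (y - q) := by
  set p := z + l • d with hp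
  have key : ∀ t : ℝ, 0 < t → t ≤ 1 →
      0 ≤ 2 * l * (g q - g y) - 2 * @inner ℝ H _ (p - y) (q - y) + t * ‖q - y‖ ^ 2 := by
    intro t ht ht1
    have h1 := hy ((1 - t) • y + t • q)
    have h2 := hg.2 (Set.mem_univ y) (Set.mem_univ q) (by linarith : (0:ℝ) ≤ 1 - t) ht.le (by ring)
    have h3 : p - ((1 - t) • y + t • q) = (p - y) - t • (q - y) := by module
    rw [h3, norm_sub_sq_real (p - y) (t • (q - y)), inner_smul_right, norm_smul, Real.norm_of_nonneg ht.le] at h1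
    simp only [smul_eq_mul] at h2
    have h4 : 0 ≤ t * (g q - g y) + (1 / (2 * l)) *
        (- 2 * (t * @inner ℝ H _ (p - y) (q - y)) + (t * ‖q - y‖) ^ 2) := by
      nlinarith
    have h5 := mul_nonneg (by positivity : 0 ≤ 2 * l / t) h4
    have h6 : 2 * l / t * (t * (g q - g y) + (1 / (2 * l)) *
        (- 2 * (t * @inner ℝ H _ (p - y) (q - y)) + (t * ‖q - y‖) ^ 2)) =
        2 * l * (g q - g y) - 2 * @inner ℝ H _ (p - y) (q - y) + t * ‖q - y‖ ^ 2 := by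
      field_simp
      ring
    linarith
  have hA : 0 ≤ 2 * l * (g q - g y) - 2 * @inner ℝ H _ (p - y) (q - y) := by
    by_contra! hneg
    set A := 2 * l * (g q - g y) - 2 * @inner ℝ H _ (p - y) (q - y)
    have hB : 0 ≤ ‖q - y‖ ^ 2 := by positivity
    set B := ‖q - y‖ ^ 2
    have ht : 0 < -A / (B - A + 1) / 1 := by
      apply div_pos (div_pos _ _) <;> linarith
    have := key (-A / (B - A + 1)) (by simpa using ht) (by rw [div_le_one] <;> linarith)
    have h7 : -A / (B - A + 1) * B < -A := by
      rw [div_mul_eq_mul_div, div_lt_iff₀ (by linarith)]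
      nlinarith
    linarith
  have e1 : p - y = (z - y) + l • d := by rw [hp]; abel
  have e2 : z - q = (z - y) - (q - y) := by abel
  have e3 : y - q = -(q - y) := by abel
  rw [e1, inner_add_left, real_inner_smul_left] at hA
  rw [e2, norm_sub_sq_real (z - y) (q - y), e3, norm_neg, inner_neg_right]
  linarith

theorem aux_firm {H : Type*} [NormedAddCommGroup H] [InnerProductSpace ℝ H]
    (a b : H) (h : ‖a‖ ^ 2 ≤ @inner ℝ H _ a b) : ‖a‖ ^ 2 ≤ ‖b‖ ^ 2 - ‖a - b‖ ^ 2 := by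
  rw [@norm_sub_sq_real]; linarith

theorem aux_conv {H : Type*} [NormedAddCommGroup H] [InnerProductSpace ℝ H]
    (a b : H) (t : ℝ) (h0 : 0 ≤ t) (h1 : t ≤ 1) :
    ‖t • a + (1 - t) • b‖ ^ 2 ≤ t * ‖a‖ ^ 2 + (1 - t) * ‖b‖ ^ 2 := by
  have e : t • a + (1 - t) • b = b + t • (a - b) := by module
  have e' : ‖a‖ ^ 2 = ‖b + (a - b)‖ ^ 2 := by congr 2; abel
  rw [e, e', @norm_add_sq_real, @norm_add_sq_real, norm_smul, Real.norm_of_nonneg h0,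
    inner_smul_right]
  nlinarith [mul_nonneg (mul_nonneg h0 (sub_nonneg.2 h1)) (sq_nonneg ‖a - b‖)]

theorem alg1_key_inequality
    {H : Type*} [NormedAddCommGroup H] [InnerProductSpace ℝ H] [CompleteSpace H]
    (M : ℕ) (hM : 1 ≤ M)
    (f h : ℕ → H → ℝ) (h' : ℕ → H → H) (L : ℕ → ℝ) (T : ℕ → H → H)
    (hf_cont : ∀ i ∈ Finset.Icc 1 M, Continuous (f i))
    (hf_conv : ∀ i ∈ Finset.Icc 1 M, ConvexOn ℝ Set.univ (f i))
    (hh_conv : ∀ i ∈ Finset.Icc 1 M, ConvexOn ℝ Set.univ (h i))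
    (hh_grad : ∀ i ∈ Finset.Icc 1 M, ∀ x : H, HasGradientAt (h i) (h' i x) x)
    (hL_pos : ∀ i ∈ Finset.Icc 1 M, 0 < L i)
    (hh_lip : ∀ i ∈ Finset.Icc 1 M, ∀ x y : H, ‖h' i x - h' i y‖ ≤ (1 / L i) * ‖x - y‖)
    (hT_firm : ∀ i ∈ Finset.Icc 1 M, ∀ x y : H,
      ‖T i x - T i y‖ ^ 2 ≤ @inner ℝ H _ (T i x - T i y) (x - y))
    (S : Set H) (hS : S = ⋂ i ∈ Finset.Icc 1 M, {x : H | T i x = x}) (hS_ne : S.Nonempty)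
    (θ lam β α : ℕ → ℝ) (σ : ℝ) (hσ : 1 ≤ σ)
    (hθ_range : ∀ n, 0 ≤ θ n ∧ θ n < 1)
    (hlam_pos : ∀ n, 0 < lam n)
    (hlam_le : ∀ n, ∀ i ∈ Finset.Icc 1 M, lam n ≤ 2 * L i)
    (hβ_range : ∀ n, 0 < β n ∧ β n ≤ 1)
    (hα_range : ∀ n, 0 < α n ∧ α n ≤ 1)
    (hθ_anti : Antitone θ) (hlam_anti : Antitone lam)
    (hβ_anti : Antitone β) (hα_anti : Antitone α)
    (hθ_lim : Tendsto θ atTop (𝓝 0)) (hlam_lim : Tendsto lam atTop (𝓝 0))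
    (hβ_lim : Tendsto β atTop (𝓝 0)) (hα_lim : Tendsto α atTop (𝓝 0))
    (hC1 : ¬ Summable α)
    (hC2 : Tendsto (fun n => (1 / α (n+1)) * |1 / lam (n+1) - 1 / lam n|) atTop (𝓝 0))
    (hC3 : Tendsto (fun n => (1 / lam (n+1)) * |1 - α n / α (n+1)|) atTop (𝓝 0))
    (hC4 : Tendsto (fun n => α n / lam n) atTop (𝓝 0))
    (hC5 : Tendsto (fun n => θ n / (α (n+1) * lam (n+1))) atTop (𝓝 0))
    (hC6 : ∀ n, lam n / lam (n+1) ≤ σ)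
    (hC7 : Tendsto (fun n => β n / α (n+1)) atTop (𝓝 0))
    (x : ℕ → H) (w z y d : ℕ → ℕ → H) (u : ℕ → H)
    (hd1 : ∀ i ∈ Finset.Icc 1 M, d 1 i = -(h' i (z 0 i)))
    (hw1 : ∀ n ≥ 1, w n 1 = x n)
    (hz : ∀ n ≥ 1, ∀ i ∈ Finset.Icc 1 M, z n i = w n i + θ n • (w n i - w (n-1) i))
    (hd : ∀ n ≥ 1, ∀ i ∈ Finset.Icc 1 M, d (n+1) i = -(h' i (z n i)) + β n • d n i)
    (hy : ∀ n ≥ 1, ∀ i ∈ Finset.Icc 1 M, ∀ v : H,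
      f i (y n i) + (1 / (2 * lam n)) * ‖z n i + lam n • d (n+1) i - y n i‖ ^ 2
        ≤ f i v + (1 / (2 * lam n)) * ‖z n i + lam n • d (n+1) i - v‖ ^ 2)
    (hw : ∀ n ≥ 1, ∀ i ∈ Finset.Icc 1 M,
      w n (i+1) = α n • u i + (1 - α n) • T i (y n i))
    (hx : ∀ n ≥ 1, x (n+1) = w n (M+1))
    (hy_bdd : ∀ i ∈ Finset.Icc 1 M, ∃ C, ∀ n ≥ 1, ‖y n i‖ ≤ C)
    : ∀ xb ∈ S, ∀ i ∈ Finset.Icc 1 M, ∃ Q₁ ≥ (0:ℝ), ∃ Q₂ ≥ (0:ℝ), ∀ n ≥ 1,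
      ‖w n (i+1) - xb‖ ^ 2 ≤ ‖w n i - xb‖ ^ 2 + θ n * Q₁ + α n * Q₂
        - (1 - α n) * ‖T i (y n i) - y n i‖ ^ 2 - ‖z n i - y n i‖ ^ 2
        + 2 * lam n * (f i xb - f i (y n i))
        + 2 * lam n * @inner ℝ H _ (d (n+1) i) (y n i - xb) := by
  intro xb hxb i hi
  have hfix : ∀ j ∈ Finset.Icc 1 M, T j xb = xb := by
    intro j hj
    rw [hS] at hxb
    simpa using Set.mem_iInter₂.1 hxb j hj
  have hfirm : ∀ j ∈ Finset.Icc 1 M, ∀ v, ‖T j v - xb‖ ^ 2 ≤ ‖v - xb‖ ^ 2 - ‖T j v - v‖ ^ 2 := by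
    intro j hj v
    have h1 := hT_firm j hj v xb
    rw [hfix j hj] at h1
    simpa using aux_firm _ _ h1
  have hwb : ∀ j ∈ Finset.Icc 1 M, ∃ C, ∀ n ≥ 1, ‖w n (j+1)‖ ≤ C := by
    intro j hj
    obtain ⟨C, hC⟩ := hy_bdd j hj
    refine ⟨‖u j‖ + (C + ‖xb‖ + ‖xb‖), fun n hn => ?_⟩
    have h1 : ‖T j (y n j) - xb‖ ≤ ‖y n j - xb‖ := by
      apply le_of_sq_le_sq _ (norm_nonneg _)
      nlinarith [hfirm j hj (y n j), sq_nonneg ‖T j (y n j) - y n j‖]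
    have h2 := norm_sub_le (y n j) xb
    have h3 := norm_le_norm_sub_add (T j (y n j)) xb
    have h4 := hC n hn
    have ha := hα_range n
    rw [hw n hn j hj]
    refine (norm_add_le _ _).trans ?_
    rw [norm_smul, norm_smul, Real.norm_of_nonneg ha.1.le, Real.norm_of_nonneg (by linarith)]
    have h5 : α n * ‖u j‖ ≤ ‖u j‖ := mul_le_of_le_one_left (norm_nonneg _) ha.2
    have h6 : (1 - α n) * ‖T j (y n j)‖ ≤ ‖T j (y n j)‖ :=
      mul_le_of_le_one_left (norm_nonneg _) (by linarith)
    linarith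
  have hwi : ∃ C, ∀ n, ‖w n i‖ ≤ C := by
    obtain ⟨hi1, hiM⟩ := Finset.mem_Icc.1 hi
    have h0 : ∃ C, ∀ n ≥ 2, ‖w n i‖ ≤ C := by
      rcases hi1.eq_or_lt with h1 | h1
      · obtain ⟨C, hC⟩ := hwb M (Finset.mem_Icc.2 ⟨hM, le_rfl⟩)
        refine ⟨C, fun n hn => ?_⟩
        obtain ⟨m, rfl⟩ : ∃ m, n = m + 1 := ⟨n - 1, by omega⟩
        rw [← h1, hw1 _ (by omega), hx m (by omega)]
        exact hC m (by omega)
      · obtain ⟨C, hC⟩ := hwb (i - 1) (Finset.mem_Icc.2 ⟨by omega, by omega⟩)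
        refine ⟨C, fun n hn => ?_⟩
        have := hC n (by omega)
        rwa [Nat.sub_add_cancel hi1] at this
    obtain ⟨C, hC⟩ := h0
    refine ⟨max C (max ‖w 0 i‖ ‖w 1 i‖), fun n => ?_⟩
    match n with
    | 0 => simp
    | 1 => simp
    | n + 2 => exact (hC _ (by omega)).trans (le_max_left _ _)
  obtain ⟨C, hC⟩ := hwi
  have hC0 : 0 ≤ C := (norm_nonneg _).trans (hC 0)
  refine ⟨2 * ((C + ‖xb‖) * (C + C)) + (C + C) ^ 2, by positivity, ‖u i - xb‖ ^ 2, by positivity,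
    fun n hn => ?_⟩
  have hp := aux_prox (f i) (hf_conv i hi) (lam n) (hlam_pos n) _ _ _ xb (hy n hn i hi)
  have hF := hfirm i hi (y n i)
  have ha := hα_range n
  have ht := hθ_range n
  have hc := aux_conv (u i - xb) (T i (y n i) - xb) (α n) ha.1.le ha.2
  have e1 : w n (i+1) - xb = α n • (u i - xb) + (1 - α n) • (T i (y n i) - xb) := by
    rw [hw n hn i hi]; module
  rw [← e1] at hc
  have e2 : z n i - xb = (w n i - xb) + θ n • (w n i - w (n-1) i) := by
    rw [hz n hn i hi]; abel
  have hzb : ‖z n i - xb‖ ^ 2 ≤ ‖w n i - xb‖ ^ 2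
      + θ n * (2 * ((C + ‖xb‖) * (C + C)) + (C + C) ^ 2) := by
    have n1 : ‖w n i - xb‖ ≤ C + ‖xb‖ := (norm_sub_le _ _).trans (by linarith [hC n])
    have n2 : ‖w n i - w (n-1) i‖ ≤ C + C :=
      (norm_sub_le _ _).trans (by linarith [hC n, hC (n-1)])
    have n3 : @inner ℝ H _ (w n i - xb) (w n i - w (n-1) i) ≤ (C + ‖xb‖) * (C + C) :=
      (real_inner_le_norm _ _).trans (by gcongr)
    have n4 : ‖w n i - w (n-1) i‖ ^ 2 ≤ (C + C) ^ 2 := by gcongr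
    have n5 : θ n * ‖w n i - w (n-1) i‖ ^ 2 ≤ (C + C) ^ 2 :=
      (mul_le_of_le_one_left (sq_nonneg _) ht.2.le).trans n4
    rw [e2, @norm_add_sq_real, norm_smul, Real.norm_of_nonneg ht.1, inner_smul_right]
    nlinarith [mul_le_mul_of_nonneg_left n3 ht.1, mul_le_mul_of_nonneg_left n5 ht.1]
  have hm := mul_le_mul_of_nonneg_left hF (by linarith : 0 ≤ 1 - α n)
  have hpos := mul_nonneg ha.1.le (sq_nonneg ‖y n i - xb‖)
  linarith
end

section
/- For the sequences generated by Algorithm 1, for every i ∈ I one has lim_{n→∞} ‖z_n^{(i)} − y_n^{(i)}‖ = 0 and lim_{n→∞} ‖x_n − w_n^{(i)}‖ = 0. -/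
open Filter Topology

lemma xu_lemma (a γ e : ℕ → ℝ) (ha : ∀ n, 0 ≤ a n) (hγ : ∀ n, 0 ≤ γ n ∧ γ n ≤ 1)
    (hs : ¬ Summable γ) (he : Tendsto e atTop (𝓝 0))
    (h : ∀ᶠ n in atTop, a (n+1) ≤ (1 - γ n) * a n + γ n * e n) :
    Tendsto a atTop (𝓝 0) := by
  rw [Metric.tendsto_atTop]
  intro ε hε
  have he' : ∀ᶠ n in atTop, e n ≤ ε/2 := (he.eventually (gt_mem_nhds (half_pos hε))).mono fun n hn => hn.le
  obtain ⟨N, hN⟩ := eventually_atTop.1 (he'.and h)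
  have key : ∀ k, a (N+k) - ε/2 ≤ Real.exp (-(∑ j ∈ Finset.range k, γ (j+N))) * a N := by
    intro k
    induction k with
    | zero => simp; linarith
    | succ k ih =>
      obtain ⟨h1, h2⟩ := hN (N+k) (by omega)
      obtain ⟨g0, g1⟩ := hγ (N+k)
      have h3 : a (N+(k+1)) - ε/2 ≤ (1 - γ (N+k)) * (a (N+k) - ε/2) := by
        have : N + (k+1) = N+k+1 := by ring
        rw [this]; nlinarith
      have h4 : 1 - γ (N+k) ≤ Real.exp (-γ (N+k)) := Real.one_sub_le_exp_neg _
      rw [Finset.sum_range_succ, neg_add, Real.exp_add, add_comm k N]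
      have h5 : 0 ≤ Real.exp (-(∑ j ∈ Finset.range k, γ (j+N))) * a N := by
        have := ha N
        positivity
      calc _ ≤ _ := h3
        _ ≤ (1 - γ (N+k)) * (Real.exp (-(∑ j ∈ Finset.range k, γ (j+N))) * a N) := by
            apply mul_le_mul_of_nonneg_left ih; linarith
        _ ≤ Real.exp (-γ (N+k)) * (Real.exp (-(∑ j ∈ Finset.range k, γ (j+N))) * a N) := by
            apply mul_le_mul_of_nonneg_right h4 h5
        _ = _ := by ring
  have hs' : ¬ Summable (fun j => γ (j+N)) := fun hh => hs ((summable_nat_add_iff N).1 hh)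
  have ht := (not_summable_iff_tendsto_nat_atTop_of_nonneg (fun j => (hγ (j+N)).1)).1 hs'
  have ht2 : Tendsto (fun k => Real.exp (-(∑ j ∈ Finset.range k, γ (j+N))) * a N) atTop (𝓝 0) := by
    have := (Real.tendsto_exp_neg_atTop_nhds_zero.comp ht).mul_const (a N)
    simpa using this
  obtain ⟨K, hK⟩ := eventually_atTop.1 (ht2.eventually (gt_mem_nhds (half_pos hε)))
  refine ⟨N+K, fun n hn => ?_⟩
  have h1 := key (n-N)
  have h2 := hK (n-N) (by omega)
  have : N + (n-N) = n := by omega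
  rw [this] at h1
  rw [Real.dist_eq, sub_zero, abs_of_nonneg (ha n)]
  linarith

section
variable {H : Type*} [NormedAddCommGroup H] [InnerProductSpace ℝ H]

lemma nonexp_of_firm (T : H → H)
    (hT : ∀ x y : H, ‖T x - T y‖ ^ 2 ≤ @inner ℝ H _ (T x - T y) (x - y)) (x y : H) :
    ‖T x - T y‖ ≤ ‖x - y‖ := by
  have h1 := hT x y
  have h2 := real_inner_le_norm (T x - T y) (x - y)
  by_contra hc
  push Not at hc
  nlinarith [norm_nonneg (x-y)]

/-- first-order optimality for the proximal point -/
lemma prox_vi (f : H → ℝ) (hf : ConvexOn ℝ Set.univ f) (l : ℝ) (hl : 0 < l) (c y : H)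
    (hy : ∀ v : H, f y + (1 / (2 * l)) * ‖c - y‖ ^ 2 ≤ f v + (1 / (2 * l)) * ‖c - v‖ ^ 2) (v : H) :
    @inner ℝ H _ (c - y) (v - y) ≤ l * (f v - f y) := by
  have key : ∀ t : ℝ, 0 < t → t ≤ 1 →
      @inner ℝ H _ (c - y) (v - y) - l * (f v - f y) ≤ t * (‖v - y‖^2 / 2) := by
    intro t ht ht1
    have h1 := hy ((1-t) • y + t • v)
    have h2 := hf.2 (Set.mem_univ y) (Set.mem_univ v) (by linarith : 0 ≤ 1 - t) ht.le (by ring)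
    simp only [smul_eq_mul] at h2
    have h3 : c - ((1-t) • y + t • v) = (c - y) - t • (v - y) := by module
    rw [h3, norm_sub_sq_real (c - y), inner_smul_right, norm_smul, Real.norm_eq_abs, abs_of_pos ht] at h1
    set A := @inner ℝ H _ (c - y) (v - y)
    have h4 : f y ≤ (1-t) * f y + t * f v + (1/(2*l)) * (-2 * (t * A) + (t * ‖v-y‖)^2) := by
      nlinarith
    have h5 : t * (2 * l * (f v - f y) - 2 * A + t * ‖v-y‖^2) ≥ 0 := by
      have : 0 ≤ t * (f v - f y) + (1/(2*l)) * (-2 * (t * A) + (t * ‖v-y‖)^2) := by linarith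
      have h6 := mul_nonneg (by positivity : 0 ≤ 2 * l) this
      have h7 : 2 * l * (t * (f v - f y) + (1/(2*l)) * (-2 * (t * A) + (t * ‖v-y‖)^2))
        = t * (2 * l * (f v - f y) - 2 * A + t * ‖v-y‖^2) := by field_simp; ring
      linarith
    have h6 := nonneg_of_mul_nonneg_right h5 ht
    linarith
  by_contra hc
  push Not at hc
  set D := @inner ℝ H _ (c - y) (v - y) - l * (f v - f y) with hD
  have hDp : 0 < D := by linarith
  have h2 := key (min 1 (D / (‖v-y‖^2 + 1))) (by positivity) (min_le_left _ _)
  have h3 : min 1 (D / (‖v-y‖^2 + 1)) * (‖v - y‖^2 / 2) ≤ (D / (‖v-y‖^2 + 1)) * (‖v - y‖^2 / 2) :=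
    mul_le_mul_of_nonneg_right (min_le_right _ _) (by positivity)
  have h4 : (D / (‖v-y‖^2 + 1)) * (‖v - y‖^2 / 2) < D := by
    rw [div_mul_eq_mul_div, div_lt_iff₀ (by positivity)]
    nlinarith [sq_nonneg ‖v-y‖]
  linarith

lemma prox_diff (f : H → ℝ) (hf : ConvexOn ℝ Set.univ f) (l l' : ℝ) (hl : 0 < l) (hl' : 0 < l')
    (c y c' y' : H)
    (hy : ∀ v : H, f y + (1 / (2 * l)) * ‖c - y‖ ^ 2 ≤ f v + (1 / (2 * l)) * ‖c - v‖ ^ 2)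
    (hy' : ∀ v : H, f y' + (1 / (2 * l')) * ‖c' - y'‖ ^ 2 ≤ f v + (1 / (2 * l')) * ‖c' - v‖ ^ 2) :
    ‖y - y'‖ ≤ ‖c - c'‖ + |1 - l / l'| * ‖c' - y'‖ := by
  have h1 := prox_vi f hf l hl c y hy y'
  have h2 := prox_vi f hf l' hl' c' y' hy' y
  have h3 : (l/l') * @inner ℝ H _ (c' - y') (y - y') ≤ l * (f y - f y') := by
    have := mul_le_mul_of_nonneg_left h2 (by positivity : 0 ≤ l / l')
    have e : l / l' * (l' * (f y - f y')) = l * (f y - f y') := by field_simp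
    linarith
  have h4 : ‖y - y'‖^2 ≤ @inner ℝ H _ ((c - c') + (1 - l/l') • (c' - y')) (y - y') := by
    have e1 : (c - c') + (1 - l/l') • (c' - y') = (c - y) + (y - y') - (l/l') • (c' - y') := by module
    rw [e1, inner_sub_left, inner_add_left, real_inner_self_eq_norm_sq, inner_smul_left]
    have e2 : @inner ℝ H _ (c - y) (y' - y) = - @inner ℝ H _ (c - y) (y - y') := by
      rw [← inner_neg_right, neg_sub]
    simp only [conj_trivial]
    linarith
  have h5 := real_inner_le_norm ((c - c') + (1 - l/l') • (c' - y')) (y - y')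
  have h6 : ‖(c - c') + (1 - l/l') • (c' - y')‖ ≤ ‖c - c'‖ + |1 - l / l'| * ‖c' - y'‖ := by
    refine (norm_add_le _ _).trans ?_
    rw [norm_smul, Real.norm_eq_abs]
  by_contra hc
  push Not at hc
  have h7 : 0 ≤ ‖c - c'‖ + |1 - l / l'| * ‖c' - y'‖ := by positivity
  nlinarith

variable [CompleteSpace H]

lemma grad_ineq (h : H → ℝ) (g : H → H) (hc : ConvexOn ℝ Set.univ h)
    (hg : ∀ x, HasGradientAt h (g x) x) (x y : H) :
    h x + @inner ℝ H _ (g x) (y - x) ≤ h y := by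
  have hd : HasDerivAt (fun t : ℝ => h (x + t • (y - x))) (@inner ℝ H _ (g x) (y - x)) 0 := by
    have h1 : HasDerivAt (fun t : ℝ => x + t • (y - x)) (y - x) 0 := by
      simpa using ((hasDerivAt_id (0:ℝ)).smul_const (y - x)).const_add x
    have h2 := (hg x).hasFDerivAt
    have h3 : HasFDerivAt h ((InnerProductSpace.toDual ℝ H) (g x)) (x + (0:ℝ) • (y - x)) := by
      simpa using h2
    have h4 := h3.comp_hasDerivAt (0:ℝ) h1
    rw [InnerProductSpace.toDual_apply_apply] at h4
    exact h4
  have hc1 : ConvexOn ℝ Set.univ (fun t : ℝ => h (x + t • (y - x))) := by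
    refine ⟨convex_univ, fun s _ t _ a b ha hb hab => ?_⟩
    have := hc.2 (Set.mem_univ (x + s • (y-x))) (Set.mem_univ (x + t • (y-x))) ha hb hab
    convert this using 2
    have : x = (a + b) • x := by rw [hab, one_smul]
    nth_rewrite 1 [this]
    simp only [smul_eq_mul]
    module
  have := hc1.le_slope_of_hasDerivAt (Set.mem_univ 0) (Set.mem_univ 1) zero_lt_one hd
  simp [slope_def_field] at this
  linarith

/-- weak Baillon-Haddad -/
lemma grad_coco (h : H → ℝ) (g : H → H) (hc : ConvexOn ℝ Set.univ h)
    (hg : ∀ x, HasGradientAt h (g x) x) (L : ℝ) (hL : 0 < L)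
    (hlip : ∀ x y : H, ‖g x - g y‖ ≤ (1 / L) * ‖x - y‖) (x y : H) :
    L / 4 * ‖g y - g x‖^2 ≤ h y - h x - @inner ℝ H _ (g x) (y - x) := by
  set v := g y - g x with hv
  set q := y - (L/2) • v with hq
  have h1 := grad_ineq h g hc hg x q
  have h2 := grad_ineq h g hc hg q y
  have h3 : q - x = (y - x) - (L/2) • v := by rw [hq]; abel
  have h4 : y - q = (L/2) • v := by rw [hq]; abel
  rw [h3, inner_sub_right, inner_smul_right] at h1
  rw [h4, inner_smul_right] at h2
  have h5 : @inner ℝ H _ (g y) v - @inner ℝ H _ (g x) v = ‖v‖^2 := by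
    rw [← inner_sub_left, ← hv, real_inner_self_eq_norm_sq]
  have h6 : @inner ℝ H _ (g y) v - @inner ℝ H _ (g q) v ≤ ‖v‖^2 / 2 := by
    rw [← inner_sub_left]
    have a1 := real_inner_le_norm (g y - g q) v
    have a2 := hlip y q
    rw [h4, norm_smul, Real.norm_eq_abs, abs_of_pos (by positivity)] at a2
    have a3 : 1 / L * (L/2 * ‖v‖) = ‖v‖/2 := by field_simp
    rw [a3] at a2
    nlinarith [norm_nonneg v]
  nlinarith

lemma fwd_nonexp (h : H → ℝ) (g : H → H) (hc : ConvexOn ℝ Set.univ h)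
    (hg : ∀ x, HasGradientAt h (g x) x) (L : ℝ) (hL : 0 < L)
    (hlip : ∀ x y : H, ‖g x - g y‖ ≤ (1 / L) * ‖x - y‖) (l : ℝ) (hl : 0 < l) (hlL : l ≤ L)
    (x y : H) : ‖(x - l • g x) - (y - l • g y)‖ ≤ ‖x - y‖ := by
  have h1 := grad_coco h g hc hg L hL hlip x y
  have h2 := grad_coco h g hc hg L hL hlip y x
  have e : (x - l • g x) - (y - l • g y) = (x - y) - l • (g x - g y) := by module
  rw [norm_sub_rev] at h1
  have h3 : L / 2 * ‖g x - g y‖^2 ≤ @inner ℝ H _ (x - y) (g x - g y) := by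
    have : @inner ℝ H _ (x - y) (g x - g y) =
      - @inner ℝ H _ (g x) (y - x) - @inner ℝ H _ (g y) (x - y) := by
      rw [← neg_sub x y, inner_neg_right, inner_sub_right, real_inner_comm, real_inner_comm (g y)]
      ring
    linarith
  rw [e]
  refine le_of_sq_le_sq ?_ (norm_nonneg _) 
  rw [norm_sub_sq_real, inner_smul_right, norm_smul, Real.norm_eq_abs, abs_of_pos hl]
  nlinarith [mul_le_mul_of_nonneg_left h3 hl.le, mul_nonneg (mul_nonneg hl.le (sub_nonneg.2 hlL)) (sq_nonneg ‖g x - g y‖)]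

lemma step_diff (f : H → ℝ) (hf : ConvexOn ℝ Set.univ f)
    (h : H → ℝ) (g : H → H) (hc : ConvexOn ℝ Set.univ h)
    (hg : ∀ x, HasGradientAt h (g x) x) (L : ℝ) (hL : 0 < L)
    (hlip : ∀ x y : H, ‖g x - g y‖ ≤ (1 / L) * ‖x - y‖)
    (T : H → H) (hT : ∀ x y : H, ‖T x - T y‖ ^ 2 ≤ @inner ℝ H _ (T x - T y) (x - y))
    (l1 l0 θ1 θ0 b1 b0 α1 α0 B : ℝ) (hl1 : 0 < l1) (hl0 : 0 < l0) (hl1L : l1 ≤ L)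
    (hθ1 : 0 ≤ θ1) (hθ0 : 0 ≤ θ0) (hb1 : 0 < b1) (hb0 : 0 < b0)
    (hα1 : 0 < α1 ∧ α1 ≤ 1)
    (w1 w0 v1 v0 z1 z0 e1 e0 c1 c0 y1 y0 w1' w0' u : H)
    (hz1 : z1 = w1 + θ1 • v1) (hz0 : z0 = w0 + θ0 • v0)
    (hc1 : c1 = z1 + l1 • (-(g z1) + b1 • e1)) (hc0 : c0 = z0 + l0 • (-(g z0) + b0 • e0))
    (hy1 : ∀ v : H, f y1 + (1 / (2 * l1)) * ‖c1 - y1‖ ^ 2 ≤ f v + (1 / (2 * l1)) * ‖c1 - v‖ ^ 2)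
    (hy0 : ∀ v : H, f y0 + (1 / (2 * l0)) * ‖c0 - y0‖ ^ 2 ≤ f v + (1 / (2 * l0)) * ‖c0 - v‖ ^ 2)
    (hw1 : w1' = α1 • u + (1 - α1) • T y1) (hw0 : w0' = α0 • u + (1 - α0) • T y0)
    (B1 : ‖v1‖ ≤ B) (B0 : ‖v0‖ ≤ B) (Bg : ‖g z0‖ ≤ B) (Be1 : ‖e1‖ ≤ B) (Be0 : ‖e0‖ ≤ B)
    (Bc : ‖c0 - y0‖ ≤ B) (Bu : ‖u - T y0‖ ≤ B) :
    ‖w1' - w0'‖ ≤ (1 - α1) * ‖w1 - w0‖ +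
      B * (θ1 + θ0 + |l1 - l0| + l1 * b1 + l0 * b0 + |1 - l1 / l0| + |α1 - α0|) := by
  have hB : 0 ≤ B := (norm_nonneg _).trans B1
  have s1 : ‖z1 - z0‖ ≤ ‖w1 - w0‖ + θ1 * B + θ0 * B := by
    have : z1 - z0 = (w1 - w0) + θ1 • v1 - θ0 • v0 := by rw [hz1, hz0]; abel
    rw [this]
    refine (norm_sub_le _ _).trans (add_le_add ((norm_add_le _ _).trans (add_le_add le_rfl ?_)) ?_)
    · rw [norm_smul, Real.norm_eq_abs, abs_of_nonneg hθ1]; gcongr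
    · rw [norm_smul, Real.norm_eq_abs, abs_of_nonneg hθ0]; gcongr
  have s2 : ‖c1 - c0‖ ≤ ‖z1 - z0‖ + |l1 - l0| * B + l1 * b1 * B + l0 * b0 * B := by
    have : c1 - c0 = ((z1 - l1 • g z1) - (z0 - l1 • g z0)) - (l1 - l0) • g z0
        + (l1 * b1) • e1 - (l0 * b0) • e0 := by
      rw [hc1, hc0]; module
    rw [this]
    refine (norm_sub_le _ _).trans (add_le_add ((norm_add_le _ _).trans
      (add_le_add ((norm_sub_le _ _).trans (add_le_add ?_ ?_)) ?_)) ?_)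
    · exact fwd_nonexp h g hc hg L hL hlip l1 hl1 hl1L z1 z0
    · rw [norm_smul, Real.norm_eq_abs]; gcongr
    · rw [norm_smul, Real.norm_eq_abs, abs_of_nonneg (by positivity)]; gcongr
    · rw [norm_smul, Real.norm_eq_abs, abs_of_nonneg (by positivity)]; gcongr
  have s3 := prox_diff f hf l1 l0 hl1 hl0 c1 y1 c0 y0 hy1 hy0
  have s4 : |1 - l1 / l0| * ‖c0 - y0‖ ≤ |1 - l1 / l0| * B := by gcongr
  have s5 : ‖w1' - w0'‖ ≤ |α1 - α0| * B + (1 - α1) * ‖y1 - y0‖ := by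
    have : w1' - w0' = (α1 - α0) • (u - T y0) + (1 - α1) • (T y1 - T y0) := by
      rw [hw1, hw0]; module
    rw [this]
    refine (norm_add_le _ _).trans (add_le_add ?_ ?_)
    · rw [norm_smul, Real.norm_eq_abs]; gcongr
    · rw [norm_smul, Real.norm_eq_abs, abs_of_nonneg (by linarith [hα1.2])]
      exact mul_le_mul_of_nonneg_left (nonexp_of_firm T hT _ _) (by linarith [hα1.2])
  set R := B * (θ1 + θ0 + |l1 - l0| + l1 * b1 + l0 * b0 + |1 - l1 / l0|) with hR
  have hR0 : 0 ≤ R := by positivity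
  have s6 : ‖y1 - y0‖ ≤ ‖w1 - w0‖ + R := by rw [hR]; linarith
  have s7 : (1 - α1) * ‖y1 - y0‖ ≤ (1 - α1) * (‖w1 - w0‖ + R) :=
    mul_le_mul_of_nonneg_left s6 (by linarith [hα1.2])
  have s8 : 0 ≤ α1 * R := mul_nonneg hα1.1.le hR0
  have s9 : B * (θ1 + θ0 + |l1 - l0| + l1 * b1 + l0 * b0 + |1 - l1 / l0| + |α1 - α0|)
    = R + B * |α1 - α0| := by rw [hR]; ring
  rw [s9]
  linarith

lemma step_fejer (f : H → ℝ) (hf : ConvexOn ℝ Set.univ f)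
    (T : H → H) (hT : ∀ x y : H, ‖T x - T y‖ ^ 2 ≤ @inner ℝ H _ (T x - T y) (x - y))
    (p : H) (hp : T p = p) (l θ α B : ℝ) (hl : 0 < l) (hθ : 0 ≤ θ ∧ θ < 1) (hα : 0 < α ∧ α ≤ 1)
    (w v z d y w' u : H) (hz : z = w + θ • v)
    (hy : ∀ q : H, f y + (1 / (2 * l)) * ‖z + l • d - y‖ ^ 2
      ≤ f q + (1 / (2 * l)) * ‖z + l • d - q‖ ^ 2)
    (hw : w' = α • u + (1 - α) • T y)
    (Bu : ‖u - p‖ ^ 2 ≤ B) (Bf : 2 * (f p - f y) - 2 * @inner ℝ H _ d (p - y) ≤ B)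
    (Bv : 2 * ‖w - p‖ * ‖v‖ + ‖v‖ ^ 2 ≤ B) :
    ‖z - y‖ ^ 2 + ‖y - T y‖ ^ 2 ≤ ‖w - p‖ ^ 2 - ‖w' - p‖ ^ 2 + B * (α + l + θ) := by
  have s1 : ‖z - p‖ ^ 2 ≤ ‖w - p‖ ^ 2 + B * θ := by
    have e : z - p = (w - p) + θ • v := by rw [hz]; abel
    have a1 : ‖z - p‖ ≤ ‖w - p‖ + θ * ‖v‖ := by
      rw [e]
      refine (norm_add_le _ _).trans (add_le_add le_rfl ?_)
      rw [norm_smul, Real.norm_eq_abs, abs_of_nonneg hθ.1]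
    have a2 : ‖z - p‖ ^ 2 ≤ (‖w - p‖ + θ * ‖v‖) ^ 2 := by gcongr
    have a3 : θ ^ 2 * ‖v‖ ^ 2 ≤ θ * ‖v‖ ^ 2 := by
      have : θ ^ 2 ≤ θ := by nlinarith [hθ.1, hθ.2]
      gcongr
    have a4 := mul_le_mul_of_nonneg_left Bv hθ.1
    nlinarith
  have s2 := prox_vi f hf l hl _ y hy p
  have s3 : ‖y - p‖ ^ 2 ≤ ‖z - p‖ ^ 2 - ‖z - y‖ ^ 2 + B * l := by
    have e : z - p = (z - y) - (p - y) := by abel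
    have e2 : z + l • d - y = (z - y) + l • d := by abel
    rw [e2, inner_add_left, inner_smul_left] at s2
    simp only [conj_trivial] at s2
    rw [e, norm_sub_sq_real (z - y), norm_sub_rev y p]
    have := mul_le_mul_of_nonneg_left Bf hl.le
    linarith
  have s4 : ‖T y - p‖ ^ 2 ≤ ‖y - p‖ ^ 2 - ‖y - T y‖ ^ 2 := by
    have a := hT y p
    rw [hp] at a
    have e : y - T y = (y - p) - (T y - p) := by abel
    rw [e, norm_sub_sq_real (y - p), real_inner_comm]
    linarith
  have s5 : ‖w' - p‖ ^ 2 ≤ B * α + ‖T y - p‖ ^ 2 := by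
    have e : w' - p = α • (u - p) + (1 - α) • (T y - p) := by rw [hw]; module
    have a1 : ‖w' - p‖ ≤ α * ‖u - p‖ + (1 - α) * ‖T y - p‖ := by
      rw [e]
      refine (norm_add_le _ _).trans (le_of_eq ?_)
      rw [norm_smul, norm_smul, Real.norm_eq_abs, Real.norm_eq_abs, abs_of_pos hα.1,
        abs_of_nonneg (by linarith [hα.2])]
    have a2 : ‖w' - p‖ ^ 2 ≤ (α * ‖u - p‖ + (1 - α) * ‖T y - p‖) ^ 2 := by gcongr
    have a3 : (α * ‖u - p‖ + (1 - α) * ‖T y - p‖) ^ 2 ≤ α * ‖u - p‖ ^ 2 + (1 - α) * ‖T y - p‖ ^ 2 := by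
      have : 0 ≤ α * (1 - α) * (‖u - p‖ - ‖T y - p‖) ^ 2 :=
        mul_nonneg (mul_nonneg hα.1.le (by linarith [hα.2])) (sq_nonneg _)
      nlinarith
    have a4 := mul_le_mul_of_nonneg_left Bu hα.1.le
    have a5 := mul_nonneg hα.1.le (sq_nonneg ‖T y - p‖)
    linarith
  linarith

end

lemma rec_bdd (a β : ℕ → ℝ) (G : ℝ) (ha : ∀ n, 0 ≤ a n) (hβ : Tendsto β atTop (𝓝 0))
    (h : ∀ n ≥ 1, a (n+1) ≤ G + β n * a n) : ∃ C, ∀ n ≥ 1, a n ≤ C := by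
  obtain ⟨N, hN⟩ := eventually_atTop.1 (hβ.eventually (gt_mem_nhds (by norm_num : (0:ℝ) < 1/2)))
  have hs : 0 ≤ ∑ j ∈ Finset.range (N+2), a j := Finset.sum_nonneg fun j _ => ha j
  refine ⟨2 * |G| + ∑ j ∈ Finset.range (N+2), a j, fun n hn => ?_⟩
  induction n, hn using Nat.le_induction with
  | base =>
    have := Finset.single_le_sum (fun j _ => ha j) (Finset.mem_range.2 (by omega : 1 < N+2))
    linarith [abs_nonneg G]
  | succ n hn ih =>
    by_cases hc : n + 1 < N + 2
    · have := Finset.single_le_sum (fun j _ => ha j) (Finset.mem_range.2 hc)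
      linarith [abs_nonneg G]
    · have h1 := h n hn
      have h2 := hN n (by omega)
      have h3 : β n * a n ≤ 1/2 * a n := mul_le_mul_of_nonneg_right h2.le (ha n)
      linarith [le_abs_self G]

lemma rate_tendsto (θ lam β α : ℕ → ℝ)
    (hθ_range : ∀ n, 0 ≤ θ n ∧ θ n < 1)
    (hlam_pos : ∀ n, 0 < lam n)
    (hβ_range : ∀ n, 0 < β n ∧ β n ≤ 1)
    (hα_range : ∀ n, 0 < α n ∧ α n ≤ 1)
    (hθ_anti : Antitone θ) (hlam_anti : Antitone lam)
    (hβ_anti : Antitone β)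
    (hC2 : Tendsto (fun n => (1 / α (n+1)) * |1 / lam (n+1) - 1 / lam n|) atTop (𝓝 0))
    (hC3 : Tendsto (fun n => (1 / lam (n+1)) * |1 - α n / α (n+1)|) atTop (𝓝 0))
    (hC5 : Tendsto (fun n => θ n / (α (n+1) * lam (n+1))) atTop (𝓝 0))
    (hC7 : Tendsto (fun n => β n / α (n+1)) atTop (𝓝 0)) :
    Tendsto (fun n => (θ (n+1) + θ n + |lam (n+1) - lam n| + lam (n+1) * β (n+1) + lam n * β n
      + |1 - lam (n+1) / lam n| + |α (n+1) - α n|) / α (n+1)) atTop (𝓝 0) := by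
  set Λ := lam 0
  have hb : Tendsto (fun n => 2 * Λ * (θ n / (α (n+1) * lam (n+1)))
      + (Λ * Λ + Λ) * ((1 / α (n+1)) * |1 / lam (n+1) - 1 / lam n|)
      + 2 * Λ * (β n / α (n+1)) + Λ * ((1 / lam (n+1)) * |1 - α n / α (n+1)|)) atTop (𝓝 0) := by
    have := (((hC5.const_mul (2*Λ)).add (hC2.const_mul (Λ * Λ + Λ))).add
      (hC7.const_mul (2*Λ))).add (hC3.const_mul Λ)
    simpa using this
  refine squeeze_zero (fun n => ?_) (fun n => ?_) hb
  · have := (hθ_range n).1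
    have := (hθ_range (n+1)).1
    have := hlam_pos n
    have := hlam_pos (n+1)
    have := (hβ_range n).1
    have := (hβ_range (n+1)).1
    have := (hα_range (n+1)).1
    positivity
  · have l0 := hlam_pos n
    have l1 := hlam_pos (n+1)
    have hΛ : 0 < Λ := hlam_pos 0
    have m0 : lam n ≤ Λ := hlam_anti (Nat.zero_le n)
    have m1 : lam (n+1) ≤ Λ := hlam_anti (Nat.zero_le _)
    have a1 := (hα_range (n+1)).1
    have t1 := hθ_anti (Nat.le_succ n)
    have b0 := (hβ_range n).1
    have b1 := (hβ_range (n+1)).1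
    have b2 := hβ_anti (Nat.le_succ n)
    set D := |1 / lam (n+1) - 1 / lam n| with hD
    have hD0 : 0 ≤ D := abs_nonneg _
    have e1 : |lam (n+1) - lam n| = lam (n+1) * lam n * D := by
      rw [hD, ← abs_of_pos (mul_pos l1 l0), ← abs_mul, abs_sub_comm]
      congr 1; field_simp
    have e2 : |1 - lam (n+1) / lam n| = lam (n+1) * D := by
      rw [hD]
      nth_rewrite 2 [← abs_of_pos l1]
      rw [← abs_mul]
      congr 1; field_simp
    have e3 : |α (n+1) - α n| = α (n+1) * |1 - α n / α (n+1)| := by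
      nth_rewrite 2 [← abs_of_pos a1]
      rw [← abs_mul]
      congr 1; field_simp
    set F := |1 - α n / α (n+1)| with hF
    have hF0 : 0 ≤ F := abs_nonneg _
    have f1 : θ (n+1) + θ n ≤ 2 * Λ * (θ n / lam (n+1)) := by
      have h1 : θ n ≤ Λ * (θ n / lam (n+1)) := by
        rw [mul_div_assoc', le_div_iff₀ l1]
        nlinarith [(hθ_range n).1]
      have h2 : θ (n+1) ≤ θ n := t1
      linarith
    have f2 : lam (n+1) * lam n * D ≤ Λ * Λ * D := by gcongr
    have f3 : lam (n+1) * D ≤ Λ * D := by gcongr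
    have f4 : lam (n+1) * β (n+1) ≤ Λ * β n := by gcongr
    have f5 : lam n * β n ≤ Λ * β n := by gcongr
    have f6 : α (n+1) * F ≤ Λ * (α (n+1) * F / lam (n+1)) := by
      rw [mul_div_assoc', le_div_iff₀ l1]
      have : 0 ≤ α (n+1) * F := by positivity
      nlinarith
    rw [e1, e2, e3, div_le_iff₀ a1]
    have : (2 * Λ * (θ n / (α (n+1) * lam (n+1)))
      + (Λ * Λ + Λ) * ((1 / α (n+1)) * D)
      + 2 * Λ * (β n / α (n+1)) + Λ * ((1 / lam (n+1)) * F)) * α (n+1)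
      = 2 * Λ * (θ n / lam (n+1)) + (Λ * Λ + Λ) * D + 2 * Λ * β n
        + Λ * (α (n+1) * F / lam (n+1)) := by
      field_simp
    rw [this]
    linarith

theorem alg1_zy_and_xw_tendsto_zero
    {H : Type*} [NormedAddCommGroup H] [InnerProductSpace ℝ H] [CompleteSpace H]
    (M : ℕ) (hM : 1 ≤ M)
    (f h : ℕ → H → ℝ) (h' : ℕ → H → H) (L : ℕ → ℝ) (T : ℕ → H → H)
    (hf_cont : ∀ i ∈ Finset.Icc 1 M, Continuous (f i))
    (hf_conv : ∀ i ∈ Finset.Icc 1 M, ConvexOn ℝ Set.univ (f i))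
    (hh_conv : ∀ i ∈ Finset.Icc 1 M, ConvexOn ℝ Set.univ (h i))
    (hh_grad : ∀ i ∈ Finset.Icc 1 M, ∀ x : H, HasGradientAt (h i) (h' i x) x)
    (hL_pos : ∀ i ∈ Finset.Icc 1 M, 0 < L i)
    (hh_lip : ∀ i ∈ Finset.Icc 1 M, ∀ x y : H, ‖h' i x - h' i y‖ ≤ (1 / L i) * ‖x - y‖)
    (hT_firm : ∀ i ∈ Finset.Icc 1 M, ∀ x y : H,
      ‖T i x - T i y‖ ^ 2 ≤ @inner ℝ H _ (T i x - T i y) (x - y))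
    (S : Set H) (hS : S = ⋂ i ∈ Finset.Icc 1 M, {x : H | T i x = x}) (hS_ne : S.Nonempty)
    (θ lam β α : ℕ → ℝ) (σ : ℝ) (hσ : 1 ≤ σ)
    (hθ_range : ∀ n, 0 ≤ θ n ∧ θ n < 1)
    (hlam_pos : ∀ n, 0 < lam n)
    (hlam_le : ∀ n, ∀ i ∈ Finset.Icc 1 M, lam n ≤ 2 * L i)
    (hβ_range : ∀ n, 0 < β n ∧ β n ≤ 1)
    (hα_range : ∀ n, 0 < α n ∧ α n ≤ 1)
    (hθ_anti : Antitone θ) (hlam_anti : Antitone lam)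
    (hβ_anti : Antitone β) (hα_anti : Antitone α)
    (hθ_lim : Tendsto θ atTop (𝓝 0)) (hlam_lim : Tendsto lam atTop (𝓝 0))
    (hβ_lim : Tendsto β atTop (𝓝 0)) (hα_lim : Tendsto α atTop (𝓝 0))
    (hC1 : ¬ Summable α)
    (hC2 : Tendsto (fun n => (1 / α (n+1)) * |1 / lam (n+1) - 1 / lam n|) atTop (𝓝 0))
    (hC3 : Tendsto (fun n => (1 / lam (n+1)) * |1 - α n / α (n+1)|) atTop (𝓝 0))
    (hC4 : Tendsto (fun n => α n / lam n) atTop (𝓝 0))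
    (hC5 : Tendsto (fun n => θ n / (α (n+1) * lam (n+1))) atTop (𝓝 0))
    (hC6 : ∀ n, lam n / lam (n+1) ≤ σ)
    (hC7 : Tendsto (fun n => β n / α (n+1)) atTop (𝓝 0))
    (x : ℕ → H) (w z y d : ℕ → ℕ → H) (u : ℕ → H)
    (hd1 : ∀ i ∈ Finset.Icc 1 M, d 1 i = -(h' i (z 0 i)))
    (hw1 : ∀ n ≥ 1, w n 1 = x n)
    (hz : ∀ n ≥ 1, ∀ i ∈ Finset.Icc 1 M, z n i = w n i + θ n • (w n i - w (n-1) i))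
    (hd : ∀ n ≥ 1, ∀ i ∈ Finset.Icc 1 M, d (n+1) i = -(h' i (z n i)) + β n • d n i)
    (hy : ∀ n ≥ 1, ∀ i ∈ Finset.Icc 1 M, ∀ v : H,
      f i (y n i) + (1 / (2 * lam n)) * ‖z n i + lam n • d (n+1) i - y n i‖ ^ 2
        ≤ f i v + (1 / (2 * lam n)) * ‖z n i + lam n • d (n+1) i - v‖ ^ 2)
    (hw : ∀ n ≥ 1, ∀ i ∈ Finset.Icc 1 M,
      w n (i+1) = α n • u i + (1 - α n) • T i (y n i))
    (hx : ∀ n ≥ 1, x (n+1) = w n (M+1))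
    (hy_bdd : ∀ i ∈ Finset.Icc 1 M, ∃ C, ∀ n ≥ 1, ‖y n i‖ ≤ C)
    : ∀ i ∈ Finset.Icc 1 M,
      Tendsto (fun n => ‖z n i - y n i‖) atTop (𝓝 0) ∧
      Tendsto (fun n => ‖x n - w n i‖) atTop (𝓝 0) := by
  obtain ⟨p, hp⟩ := hS_ne
  have hpT : ∀ i ∈ Finset.Icc 1 M, T i p = p := by
    intro i hi
    rw [hS] at hp
    exact Set.mem_iInter₂.1 hp i hi
  have hTb : ∀ i ∈ Finset.Icc 1 M, ∃ C, ∀ n ≥ 1, ‖T i (y n i)‖ ≤ C := by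
    intro i hi
    obtain ⟨C, hC⟩ := hy_bdd i hi
    refine ⟨C + 2 * ‖p‖, fun n hn => ?_⟩
    have h1 := nonexp_of_firm (T i) (hT_firm i hi) (y n i) p
    rw [hpT i hi] at h1
    have h2 := norm_sub_le (y n i) p
    have h3 := norm_le_norm_sub_add (T i (y n i)) p
    linarith [hC n hn]
  have hw'b : ∀ i ∈ Finset.Icc 1 M, ∃ C, ∀ n ≥ 1, ‖w n (i+1)‖ ≤ C := by
    intro i hi
    obtain ⟨C, hC⟩ := hTb i hi
    refine ⟨‖u i‖ + C, fun n hn => ?_⟩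
    rw [hw n hn i hi]
    obtain ⟨a0, a1⟩ := hα_range n
    refine (norm_add_le _ _).trans (add_le_add ?_ ?_)
    · rw [norm_smul, Real.norm_eq_abs, abs_of_pos a0]
      exact mul_le_of_le_one_left (norm_nonneg _) a1
    · rw [norm_smul, Real.norm_eq_abs, abs_of_nonneg (by linarith)]
      exact (mul_le_of_le_one_left (norm_nonneg _) (by linarith)).trans (hC n hn)
  have hwb : ∀ i ∈ Finset.Icc 1 M, ∃ C, ∀ n, ‖w n i‖ ≤ C := by
    intro i hi
    obtain ⟨hi1, hi2⟩ := Finset.mem_Icc.1 hi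
    rcases Nat.eq_or_lt_of_le hi1 with rfl | hlt
    · obtain ⟨C, hC⟩ := hw'b M (Finset.mem_Icc.2 ⟨hM, le_rfl⟩)
      refine ⟨|C| + ‖w 0 1‖ + ‖w 1 1‖, fun n => ?_⟩
      have q1 := norm_nonneg (w 0 1)
      have q2 := norm_nonneg (w 1 1)
      have q3 := abs_nonneg C
      match n with
      | 0 => linarith
      | 1 => linarith
      | n+2 =>
        rw [hw1 (n+2) (by omega), hx (n+1) (by omega)]
        linarith [hC (n+1) (by omega), le_abs_self C]
    · obtain ⟨j, rfl⟩ : ∃ j, i = j + 1 := ⟨i - 1, by omega⟩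
      obtain ⟨C, hC⟩ := hw'b j (Finset.mem_Icc.2 ⟨by omega, by omega⟩)
      refine ⟨|C| + ‖w 0 (j+1)‖, fun n => ?_⟩
      have q1 := norm_nonneg (w 0 (j+1))
      have q3 := abs_nonneg C
      match n with
      | 0 => linarith
      | n+1 => linarith [hC (n+1) (by omega), le_abs_self C]
  -- collect all bounds
  have hB : ∀ i ∈ Finset.Icc 1 M, ∃ B, ∀ n ≥ 1,
      ‖w n i - w (n-1) i‖ ≤ B ∧ ‖h' i (z n i)‖ ≤ B ∧ ‖d n i‖ ≤ B ∧
      ‖z n i + lam n • d (n+1) i - y n i‖ ≤ B ∧ ‖u i - T i (y n i)‖ ≤ B ∧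
      ‖u i - p‖ ^ 2 ≤ B ∧ 2 * (f i p - f i (y n i)) - 2 * @inner ℝ H _ (d (n+1) i) (p - y n i) ≤ B ∧
      2 * ‖w n i - p‖ * ‖w n i - w (n-1) i‖ + ‖w n i - w (n-1) i‖ ^ 2 ≤ B := by
    intro i hi
    obtain ⟨Cy, hCy⟩ := hy_bdd i hi
    obtain ⟨CT, hCT⟩ := hTb i hi
    obtain ⟨Cw, hCw⟩ := hwb i hi
    have Cw0 : 0 ≤ Cw := (norm_nonneg _).trans (hCw 0)
    have Cy0 : 0 ≤ Cy := (norm_nonneg _).trans (hCy 1 le_rfl)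
    have CT0 : 0 ≤ CT := (norm_nonneg _).trans (hCT 1 le_rfl)
    have hLi := hL_pos i hi
    have bv : ∀ n, ‖w n i - w (n-1) i‖ ≤ 2 * Cw := fun n => by
      linarith [norm_sub_le (w n i) (w (n-1) i), hCw n, hCw (n-1)]
    have bz : ∀ n ≥ 1, ‖z n i‖ ≤ 3 * Cw := fun n hn => by
      rw [hz n hn i hi]
      have h1 : ‖θ n • (w n i - w (n-1) i)‖ ≤ 2 * Cw := by
        rw [norm_smul, Real.norm_eq_abs, abs_of_nonneg (hθ_range n).1]
        exact (mul_le_of_le_one_left (norm_nonneg _) (hθ_range n).2.le).trans (bv n)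
      linarith [norm_add_le (w n i) (θ n • (w n i - w (n-1) i)), hCw n]
    obtain ⟨G, hG⟩ : ∃ G, ∀ n ≥ 1, ‖h' i (z n i)‖ ≤ G := by
      refine ⟨‖h' i 0‖ + 1 / L i * (3 * Cw), fun n hn => ?_⟩
      have h1 := hh_lip i hi (z n i) 0
      rw [sub_zero] at h1
      have h2 : 1 / L i * ‖z n i‖ ≤ 1 / L i * (3 * Cw) :=
        mul_le_mul_of_nonneg_left (bz n hn) (by positivity)
      have h3 := norm_le_norm_sub_add (h' i (z n i)) (h' i 0)
      linarith
    have G0 : 0 ≤ G := (norm_nonneg _).trans (hG 1 le_rfl)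
    obtain ⟨Cd, hCd⟩ := rec_bdd (fun n => ‖d n i‖) β G (fun n => norm_nonneg _) hβ_lim (by
      intro n hn
      rw [hd n hn i hi]
      refine (norm_add_le _ _).trans (add_le_add ?_ ?_)
      · rw [norm_neg]; exact hG n hn
      · rw [norm_smul, Real.norm_eq_abs, abs_of_pos (hβ_range n).1])
    have Cd0 : 0 ≤ Cd := (norm_nonneg _).trans (hCd 1 le_rfl)
    -- lower bound for f
    obtain ⟨F, hF⟩ : ∃ F, ∀ n ≥ 1, - f i (y n i) ≤ F := by
      set c := z 1 i + lam 1 • d (1+1) i with hc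
      refine ⟨- f i (y 1 i) + (1 / (2 * lam 1)) * (‖c‖ + Cy)^2, fun n hn => ?_⟩
      have h1 := hy 1 le_rfl i hi (y n i)
      rw [← hc] at h1
      have l1 := hlam_pos 1
      have h2 : 0 ≤ (1 / (2 * lam 1)) * ‖c - y 1 i‖^2 := by positivity
      have h3 : ‖c - y n i‖ ≤ ‖c‖ + Cy := by linarith [norm_sub_le c (y n i), hCy n hn]
      have h4 : (1 / (2 * lam 1)) * ‖c - y n i‖^2 ≤ (1 / (2 * lam 1)) * (‖c‖ + Cy)^2 := by gcongr
      linarith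
    have hl0 := hlam_pos 0
    set K1 := 3 * Cw + lam 0 * Cd + Cy with hK1
    set K2 := 2 * (f i p + F) + 2 * (Cd * (‖p‖ + Cy)) with hK2
    set K3 := 2 * (Cw + ‖p‖) * (2 * Cw) + (2 * Cw)^2 with hK3
    have k1 : 0 ≤ K1 := by positivity
    have k3 : 0 ≤ K3 := by positivity
    refine ⟨2 * Cw + G + Cd + K1 + (‖u i‖ + CT) + ‖u i - p‖^2 + |K2| + K3, fun n hn => ?_⟩
    have k2 := abs_nonneg K2
    have k2' := le_abs_self K2
    have u0 := norm_nonneg (u i)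
    have u1 := sq_nonneg ‖u i - p‖
    refine ⟨?_, ?_, ?_, ?_, ?_, ?_, ?_, ?_⟩
    · linarith [bv n]
    · linarith [hG n hn]
    · linarith [hCd n hn]
    · have h1 : ‖lam n • d (n+1) i‖ ≤ lam 0 * Cd := by
        rw [norm_smul, Real.norm_eq_abs, abs_of_pos (hlam_pos n)]
        exact mul_le_mul (hlam_anti (Nat.zero_le n)) (hCd (n+1) (by omega)) (norm_nonneg _) hl0.le
      have h2 := norm_sub_le (z n i + lam n • d (n+1) i) (y n i)
      have h3 := norm_add_le (z n i) (lam n • d (n+1) i)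
      linarith [bz n hn, hCy n hn]
    · linarith [norm_sub_le (u i) (T i (y n i)), hCT n hn]
    · linarith
    · have h1 := abs_real_inner_le_norm (d (n+1) i) (p - y n i)
      have h2 := neg_abs_le (@inner ℝ H _ (d (n+1) i) (p - y n i))
      have h3 : ‖d (n+1) i‖ * ‖p - y n i‖ ≤ Cd * (‖p‖ + Cy) :=
        mul_le_mul (hCd (n+1) (by omega)) (by linarith [norm_sub_le p (y n i), hCy n hn])
          (norm_nonneg _) Cd0
      have h4 := hF n hn
      linarith
    · have h1 : ‖w n i - p‖ ≤ Cw + ‖p‖ := by linarith [norm_sub_le (w n i) p, hCw n]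
      have h2 := bv n
      have h3 : 2 * ‖w n i - p‖ * ‖w n i - w (n-1) i‖ + ‖w n i - w (n-1) i‖ ^ 2 ≤ K3 := by
        rw [hK3]; gcongr
      linarith
  choose! B hB using hB
  -- one-step difference estimates
  set r : ℕ → ℝ := fun n => (θ (n+1) + θ n + |lam (n+1) - lam n| + lam (n+1) * β (n+1) + lam n * β n
      + |1 - lam (n+1) / lam n| + |α (n+1) - α n|) / α (n+1) with hr
  have hr_lim : Tendsto r atTop (𝓝 0) := rate_tendsto θ lam β α hθ_range hlam_pos hβ_range hα_range
    hθ_anti hlam_anti hβ_anti hC2 hC3 hC5 hC7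
  have hstep : ∀ i ∈ Finset.Icc 1 M, ∀ᶠ n in atTop, ‖w (n+1) (i+1) - w n (i+1)‖ ≤
      (1 - α (n+1)) * ‖w (n+1) i - w n i‖ + α (n+1) * (B i * r n) := by
    intro i hi
    have hLi := hL_pos i hi
    filter_upwards [hlam_lim.eventually (gt_mem_nhds hLi), eventually_ge_atTop 1] with n hn1 hn
    obtain ⟨p1, p2, p3, p4, p5, -⟩ := hB i hi n hn
    obtain ⟨q1, q2, q3, q4, q5, -⟩ := hB i hi (n+1) (by omega)
    have a1 := hα_range (n+1)
    have := step_diff (f i) (hf_conv i hi) (h i) (h' i) (hh_conv i hi) (hh_grad i hi) (L i) hLi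
      (hh_lip i hi) (T i) (hT_firm i hi) (lam (n+1)) (lam n) (θ (n+1)) (θ n) (β (n+1)) (β n)
      (α (n+1)) (α n) (B i) (hlam_pos _) (hlam_pos _) ((hlam_anti (Nat.le_succ n)).trans hn1.le)
      (hθ_range _).1 (hθ_range _).1 (hβ_range _).1 (hβ_range _).1 a1
      (w (n+1) i) (w n i) (w (n+1) i - w (n+1-1) i) (w n i - w (n-1) i) (z (n+1) i) (z n i)
      (d (n+1) i) (d n i) (z (n+1) i + lam (n+1) • d (n+1+1) i) (z n i + lam n • d (n+1) i)
      (y (n+1) i) (y n i) (w (n+1) (i+1)) (w n (i+1)) (u i)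
      (hz (n+1) (by omega) i hi) (hz n hn i hi)
      (by rw [hd (n+1) (by omega) i hi]) (by rw [hd n hn i hi])
      (hy (n+1) (by omega) i hi) (hy n hn i hi) (hw (n+1) (by omega) i hi) (hw n hn i hi)
      q1 p1 p2 q3 p3 p4 p5
    refine this.trans (le_of_eq ?_)
    rw [hr]
    have := a1.1.ne'
    field_simp
  have hchain : ∀ k, 1 ≤ k → k ≤ M → ∃ e : ℕ → ℝ, Tendsto e atTop (𝓝 0) ∧ ∀ᶠ n in atTop,
      ‖w (n+1) (k+1) - w n (k+1)‖ ≤ (1 - α (n+1)) * ‖x (n+1) - x n‖ + α (n+1) * e n := by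
    intro k hk
    induction k, hk using Nat.le_induction with
    | base =>
      intro h1
      refine ⟨fun n => B 1 * r n, by simpa using hr_lim.const_mul (B 1), ?_⟩
      filter_upwards [hstep 1 (Finset.mem_Icc.2 ⟨le_rfl, h1⟩), eventually_ge_atTop 1] with n hn h1n
      rwa [hw1 (n+1) (by omega), hw1 n h1n] at hn
    | succ k hk ih =>
      intro hkM
      obtain ⟨e, he, hev⟩ := ih (by omega)
      refine ⟨fun n => e n + B (k+1) * r n, by simpa using he.add (hr_lim.const_mul (B (k+1))), ?_⟩
      filter_upwards [hev, hstep (k+1) (Finset.mem_Icc.2 ⟨by omega, hkM⟩)] with n h1 h2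
      have h3 : 0 ≤ α (n+1) * ‖w (n+1) (k+1) - w n (k+1)‖ :=
        mul_nonneg (hα_range _).1.le (norm_nonneg _)
      linarith
  have hxdiff : Tendsto (fun n => ‖x (n+1) - x n‖) atTop (𝓝 0) := by
    obtain ⟨e, he, hev⟩ := hchain M hM le_rfl
    refine xu_lemma _ (fun n => α (n+1)) e (fun n => norm_nonneg _)
      (fun n => ⟨(hα_range _).1.le, (hα_range _).2⟩)
      (fun hh => hC1 ((summable_nat_add_iff 1).1 hh)) he ?_
    filter_upwards [hev, eventually_ge_atTop 1] with n hn h1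
    rw [hx (n+1) (by omega)]
    nth_rewrite 1 [hx n h1]
    exact hn
  -- Fejer-type estimate
  have hfej : ∀ i ∈ Finset.Icc 1 M, ∀ n ≥ 1, ‖z n i - y n i‖ ^ 2 + ‖y n i - T i (y n i)‖ ^ 2 ≤
      ‖w n i - p‖ ^ 2 - ‖w n (i+1) - p‖ ^ 2 + B i * (α n + lam n + θ n) := by
    intro i hi n hn
    obtain ⟨-, -, -, -, -, p6, p7, p8⟩ := hB i hi n hn
    exact step_fejer (f i) (hf_conv i hi) (T i) (hT_firm i hi) p (hpT i hi) (lam n) (θ n) (α n) (B i)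
      (hlam_pos n) (hθ_range n) (hα_range n) _ _ _ (d (n+1) i) _ _ (u i) (hz n hn i hi)
      (hy n hn i hi) (hw n hn i hi) p6 p7 p8
  obtain ⟨Cx, hCx⟩ := hwb 1 (Finset.mem_Icc.2 ⟨le_rfl, hM⟩)
  have hsmall : Tendsto (fun n => ‖x (n+1) - x n‖ * (2 * (Cx + ‖p‖)) +
      (∑ j ∈ Finset.range M, B (j+1)) * (α n + lam n + θ n)) atTop (𝓝 0) := by
    have := (hxdiff.mul_const (2 * (Cx + ‖p‖))).add
      (((hα_lim.add hlam_lim).add hθ_lim).const_mul (∑ j ∈ Finset.range M, B (j+1)))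
    simpa using this
  have hq : ∀ i ∈ Finset.Icc 1 M, Tendsto
      (fun n => ‖z n i - y n i‖ ^ 2 + ‖y n i - T i (y n i)‖ ^ 2) atTop (𝓝 0) := by
    intro i hi
    obtain ⟨hi1, hi2⟩ := Finset.mem_Icc.1 hi
    refine squeeze_zero' (Eventually.of_forall fun n => by positivity) ?_ hsmall
    filter_upwards [eventually_ge_atTop 1] with n hn
    have h1 : ∑ j ∈ Finset.range M, (‖z n (j+1) - y n (j+1)‖ ^ 2 + ‖y n (j+1) - T (j+1) (y n (j+1))‖ ^ 2)
        ≤ ∑ j ∈ Finset.range M, ((‖w n (j+1) - p‖ ^ 2 - ‖w n (j+1+1) - p‖ ^ 2)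
          + B (j+1) * (α n + lam n + θ n)) := by
      refine Finset.sum_le_sum fun j hj => ?_
      have := Finset.mem_range.1 hj
      exact hfej (j+1) (Finset.mem_Icc.2 ⟨by omega, by omega⟩) n hn
    have h2 := Finset.single_le_sum
      (f := fun j => ‖z n (j+1) - y n (j+1)‖ ^ 2 + ‖y n (j+1) - T (j+1) (y n (j+1))‖ ^ 2)
      (fun j _ => by positivity) (Finset.mem_range.2 (by omega : i - 1 < M))
    have h3 : i - 1 + 1 = i := by omega
    simp only [h3] at h2
    replace h1 := h2.trans h1
    rw [Finset.sum_add_distrib, Finset.sum_range_sub' (fun j => ‖w n (j+1) - p‖ ^ 2),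
      ← Finset.sum_mul] at h1
    have h4 : ‖w n (0+1) - p‖ ^ 2 - ‖w n (M+1) - p‖ ^ 2 ≤ ‖x (n+1) - x n‖ * (2 * (Cx + ‖p‖)) := by
      have g1 := hCx n
      have g2 := hCx (n+1)
      rw [hw1 (n+1) (by omega)] at g2
      rw [hw1 n hn] at g1
      rw [zero_add, hw1 n hn, ← hx n hn]
      have g3 : ‖x n - p‖ - ‖x (n+1) - p‖ ≤ ‖x (n+1) - x n‖ := by
        have := norm_sub_norm_le (x n - p) (x (n+1) - p)
        rw [sub_sub_sub_cancel_right, norm_sub_rev (x n) (x (n+1))] at this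
        exact this
      have g4 : ‖x n - p‖ + ‖x (n+1) - p‖ ≤ 2 * (Cx + ‖p‖) := by
        linarith [norm_sub_le (x n) p, norm_sub_le (x (n+1)) p]
      have g5 : 0 ≤ ‖x n - p‖ + ‖x (n+1) - p‖ := by positivity
      nlinarith [norm_nonneg (x (n+1) - x n)]
    linarith
  have hsq : ∀ a : ℕ → ℝ, (∀ n, 0 ≤ a n) → Tendsto (fun n => a n ^ 2) atTop (𝓝 0) →
      Tendsto a atTop (𝓝 0) := by
    intro a ha h2
    have := (Real.continuous_sqrt.tendsto 0).comp h2
    rw [Real.sqrt_zero] at this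
    refine this.congr fun n => ?_
    simp [Real.sqrt_sq (ha n)]
  have hzy : ∀ i ∈ Finset.Icc 1 M, Tendsto (fun n => ‖z n i - y n i‖) atTop (𝓝 0) := fun i hi =>
    hsq _ (fun n => norm_nonneg _) (squeeze_zero (fun n => by positivity)
      (fun n => le_add_of_nonneg_right (by positivity)) (hq i hi))
  have hyT : ∀ i ∈ Finset.Icc 1 M, Tendsto (fun n => ‖y n i - T i (y n i)‖) atTop (𝓝 0) := fun i hi =>
    hsq _ (fun n => norm_nonneg _) (squeeze_zero (fun n => by positivity)
      (fun n => le_add_of_nonneg_left (by positivity)) (hq i hi))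
  have hww : ∀ i ∈ Finset.Icc 1 M, Tendsto (fun n => ‖w n i - w n (i+1)‖) atTop (𝓝 0) := by
    intro i hi
    have hlim : Tendsto (fun n => ‖z n i - y n i‖ + ‖y n i - T i (y n i)‖ + α n * B i + θ n * B i)
        atTop (𝓝 0) := by
      simpa using (((hzy i hi).add (hyT i hi)).add (hα_lim.mul_const (B i))).add
        (hθ_lim.mul_const (B i))
    refine squeeze_zero' (Eventually.of_forall fun n => norm_nonneg _) ?_ hlim
    filter_upwards [eventually_ge_atTop 1] with n hn
    obtain ⟨p1, -, -, -, p5, -⟩ := hB i hi n hn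
    have e : w n i - w n (i+1) = (z n i - y n i) + (y n i - T i (y n i))
        - α n • (u i - T i (y n i)) - θ n • (w n i - w (n-1) i) := by
      rw [hw n hn i hi, hz n hn i hi]; module
    rw [e]
    refine (norm_sub_le _ _).trans (add_le_add ((norm_sub_le _ _).trans
      (add_le_add (norm_add_le _ _) ?_)) ?_)
    · rw [norm_smul, Real.norm_eq_abs, abs_of_pos (hα_range n).1]
      exact mul_le_mul_of_nonneg_left p5 (hα_range n).1.le
    · rw [norm_smul, Real.norm_eq_abs, abs_of_nonneg (hθ_range n).1]
      exact mul_le_mul_of_nonneg_left p1 (hθ_range n).1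
  have hxw : ∀ i, 1 ≤ i → i ≤ M → Tendsto (fun n => ‖x n - w n i‖) atTop (𝓝 0) := by
    intro i hi
    induction i, hi using Nat.le_induction with
    | base =>
      intro _
      refine tendsto_const_nhds.congr' ?_
      filter_upwards [eventually_ge_atTop 1] with n hn
      rw [hw1 n hn]; simp
    | succ i hi ih =>
      intro hiM
      refine squeeze_zero (fun n => norm_nonneg _) (fun n => norm_sub_le_norm_sub_add_norm_sub _ (w n i) _) ?_
      simpa using (ih (by omega)).add (hww i (Finset.mem_Icc.2 ⟨hi, by omega⟩))
  intro i hi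
  obtain ⟨hi1, hi2⟩ := Finset.mem_Icc.1 hi
  exact ⟨hzy i hi, hxw i hi1 hi2⟩
end
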